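/- arXiv:1602.01749 — 2 statements merged into one kernel-verified Lean document; each statement's English description precedes it below -/
import Mathlib

section
/- Let p and q be coprime integers with q > 0 and p/q ≠ −1/2, and let σ ∈ PGL₂(ℚ) be given by σ(z) = (qz + p)/((p + q)z − q) (an involution interchanging (1 + i√3)/2 and (1 − i√3)/2). Then for every algebraic number α with α ∉ {(1 + i√3)/2, (1 − i√3)/2}, h(α) + h(σ(α)) ≥ log max(|p + 2q|/3, |p − q|/3). Moreover, if 3 divides p − q, then equality holds for α = −1. -/
/- For a nonzero `f ∈ ℤ[X]`, the Mahler measure `M(f) = |a_n| ∏ max(|α_i|,1)`. -/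
open Polynomial

noncomputable def mahlerMeasure (f : ℤ[X]) : ℝ :=
  |(f.leadingCoeff : ℝ)| *
    (((f.map (Int.castRingHom ℂ)).roots).map (fun z => max ‖z‖ 1)).prod

/-- The primitive minimal polynomial over `ℤ` of an algebraic number. -/
noncomputable def intMinpoly (α : ℂ) : ℤ[X] :=
  (IsLocalization.integerNormalization (nonZeroDivisors ℤ) (minpoly ℚ α)).primPart

/-- The absolute logarithmic Weil height `h(α) = (1/n) log M(f)`. -/
noncomputable def height (α : ℂ) : ℝ :=
  Real.log (mahlerMeasure (intMinpoly α)) / (minpoly ℚ α).natDegree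


lemma aux_interp (A B c x0 x1 t : ℝ) (hc : 0 ≤ c) (ht0 : x0 ≤ t) (ht1 : t ≤ x1)
    (h0 : c * (x0 ^ 2 - x0 + 1) ≤ A * x0 + B) (h1 : c * (x1 ^ 2 - x1 + 1) ≤ A * x1 + B) :
    c * (t ^ 2 - t + 1) ≤ A * t + B := by
  rcases eq_or_lt_of_le (ht0.trans ht1) with h | h
  · have : t = x0 := le_antisymm (h ▸ ht1) ht0
    subst this; exact h0
  · have hpos : 0 < x1 - x0 := by linarith
    have key : (x1 - x0) * (A * t + B - c * (t ^ 2 - t + 1)) =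
        (x1 - t) * (A * x0 + B - c * (x0 ^ 2 - x0 + 1)) +
        (t - x0) * (A * x1 + B - c * (x1 ^ 2 - x1 + 1)) +
        c * ((t - x0) * (x1 - t) * (x1 - x0)) := by ring
    have h2 : 0 ≤ (x1 - x0) * (A * t + B - c * (t ^ 2 - t + 1)) := by
      rw [key]
      have e1 : 0 ≤ x1 - t := by linarith
      have e2 : 0 ≤ t - x0 := by linarith
      have e3 := sub_nonneg.2 h0
      have e4 := sub_nonneg.2 h1
      positivity
    have := nonneg_of_mul_nonneg_right h2 hpos
    linarith

lemma aux_real1 (p q t : ℝ) (h1 : -1 ≤ t) (h2 : t ≤ 1) (hp : 0 < p + 2 * q)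
    (hM : |p - q| ≤ p + 2 * q) :
    (p + 2 * q) / 3 * (t ^ 2 - t + 1) ≤ max |q * t + p| |(p + q) * t - q| := by
  obtain ⟨ha, hb⟩ := abs_le.1 hM
  have hpne : p + 2 * q ≠ 0 := hp.ne'
  set z := (q - p) / (p + 2 * q) with hz
  have hzv : z ^ 2 - z + 1 = 3 * (p ^ 2 + p * q + q ^ 2) / (p + 2 * q) ^ 2 := by
    have hm : z * (p + 2 * q) = q - p := div_mul_cancel₀ _ hpne
    rw [eq_div_iff (pow_ne_zero 2 hpne)]
    linear_combination (z * (p + 2 * q) + (q - p) - (p + 2 * q)) * hm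
  have hm : z * (p + 2 * q) = q - p := div_mul_cancel₀ _ hpne
  have hz0 : (p + 2 * q) / 3 * (z ^ 2 - z + 1) = (p ^ 2 + p * q + q ^ 2) / (p + 2 * q) := by
    rw [hzv]; field_simp
  rcases le_total t z with h | h
  · refine le_trans ?_ (le_trans (neg_le_abs _) (le_max_right _ _))
    have := aux_interp (-(p + q)) q ((p + 2 * q) / 3) (-1) z t (by linarith) h1 h (by linarith) (by
      rw [hz0]; apply le_of_eq; rw [div_eq_iff hpne]; linear_combination (p + q) * hm)
    linarith
  · refine le_trans ?_ (le_trans (le_abs_self _) (le_max_left _ _))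
    exact aux_interp q p ((p + 2 * q) / 3) z 1 t (by linarith) h h2 (by
      rw [hz0]; apply le_of_eq; rw [div_eq_iff hpne]; linear_combination -q * hm) (by linarith)

lemma aux_real2 (p q t : ℝ) (h1 : -1 ≤ t) (h2 : t ≤ 1) (hp : 0 < p - q)
    (hM : |p + 2 * q| ≤ p - q) :
    (p - q) / 3 * (t ^ 2 - t + 1) ≤ max |q * t + p| |(p + q) * t - q| := by
  obtain ⟨ha, hb⟩ := abs_le.1 hM
  by_cases hc : 0 ≤ p + 2 * q
  · refine le_trans ?_ (le_trans (le_abs_self _) (le_max_left _ _))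
    exact aux_interp q p ((p - q) / 3) (-1) 1 t (by linarith) h1 h2 (by linarith) (by linarith)
  · push Not at hc
    have hp0 : 0 < p := by linarith
    set z := (p + q) / p with hz
    have hzv : z ^ 2 - z + 1 = (p ^ 2 + p * q + q ^ 2) / p ^ 2 := by
      rw [hz]; field_simp; ring
    have hD : 0 ≤ (p ^ 2 + p * q + q ^ 2) / p ^ 2 := by
      have : 0 ≤ p ^ 2 + p * q + q ^ 2 := by nlinarith [sq_nonneg (p + q), sq_nonneg p, sq_nonneg q]
      positivity
    have hz0 : (p - q) / 3 * (z ^ 2 - z + 1) ≤ (p ^ 2 + p * q + q ^ 2) / p := by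
      rw [hzv]
      calc _ ≤ p * ((p ^ 2 + p * q + q ^ 2) / p ^ 2) :=
            mul_le_mul_of_nonneg_right (by linarith) hD
        _ = _ := by field_simp
    rcases le_total t z with h | h
    · refine le_trans ?_ (le_trans (le_abs_self _) (le_max_left _ _))
      exact aux_interp q p ((p - q) / 3) (-1) z t (by linarith) h1 h (by linarith)
        (hz0.trans (by rw [hz]; apply le_of_eq; field_simp; ring))
    · refine le_trans ?_ (le_trans (le_abs_self _) (le_max_right _ _))
      have := aux_interp (p + q) (-q) ((p - q) / 3) z 1 t (by linarith) h h2
        (hz0.trans (by rw [hz]; apply le_of_eq; field_simp; ring)) (by linarith)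
      linarith

lemma aux_real (p q t : ℝ) (h1 : -1 ≤ t) (h2 : t ≤ 1) :
    max |p + 2 * q| |p - q| / 3 * (t ^ 2 - t + 1) ≤ max |q * t + p| |(p + q) * t - q| := by
  have e1 : |-q * t + -p| = |q * t + p| := by rw [← abs_neg]; ring_nf
  have e2 : |(-p + -q) * t - -q| = |(p + q) * t - q| := by rw [← abs_neg]; ring_nf
  have e3 : |-p + 2 * -q| = |p + 2 * q| := by rw [← abs_neg]; ring_nf
  have e4 : |-p - -q| = |p - q| := by rw [← abs_neg]; ring_nf
  rcases le_total |p - q| |p + 2 * q| with h | h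
  · rw [max_eq_left h]
    rcases lt_trichotomy (p + 2 * q) 0 with h0 | h0 | h0
    · have := aux_real1 (-p) (-q) t h1 h2 (by linarith)
        (by rw [e4]; rw [abs_of_neg h0] at h; linarith)
      rw [e1, e2] at this
      rw [abs_of_neg h0]
      convert this using 3; ring
    · rw [h0]; simp
    · rw [abs_of_pos h0] at h ⊢
      exact aux_real1 p q t h1 h2 h0 h
  · rw [max_eq_right h]
    rcases lt_trichotomy (p - q) 0 with h0 | h0 | h0
    · have := aux_real2 (-p) (-q) t h1 h2 (by linarith)
        (by rw [e3]; rw [abs_of_neg h0] at h; linarith)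
      rw [e1, e2] at this
      rw [abs_of_neg h0]
      convert this using 3; ring
    · rw [h0]; simp
    · rw [abs_of_pos h0] at h ⊢
      exact aux_real2 p q t h1 h2 h0 h

lemma aux_AB (A B : ℝ) (hA : A ≤ 0) (h : (B + 1) ^ 2 ≤ 4 * (A + 1)) (hne : A ≠ 0 ∨ B ≠ 0) :
    ∃ s : ℝ, 1 ≤ s ∧ 4 * (s * A + 1) = (s * B + 1) ^ 2 := by
  have hcont : Continuous fun s : ℝ => 4 * (s * A + 1) - (s * B + 1) ^ 2 := by fun_prop
  have hex : ∃ S : ℝ, 1 ≤ S ∧ 4 * (S * A + 1) - (S * B + 1) ^ 2 ≤ 0 := by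
    by_cases hB : B = 0
    · have hA' : A < 0 := lt_of_le_of_ne hA (by tauto)
      refine ⟨max 1 (-1 / A), le_max_left _ _, ?_⟩
      have : max 1 (-1 / A) * A ≤ -1 := by
        calc _ ≤ (-1 / A) * A := mul_le_mul_of_nonpos_right (le_max_right _ _) hA
          _ = -1 := div_mul_cancel₀ _ hA'.ne
      subst hB; nlinarith
    · refine ⟨max 1 (3 / |B|), le_max_left _ _, ?_⟩
      set S := max 1 (3 / |B|)
      have hS : 1 ≤ S := le_max_left _ _
      have h3 : 3 ≤ S * |B| := by
        have hb : 0 < |B| := abs_pos.2 hB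
        calc 3 = 3 / |B| * |B| := by field_simp
          _ ≤ _ := mul_le_mul_of_nonneg_right (le_max_right _ _) hb.le
      have h4 : S * A ≤ 0 := mul_nonpos_of_nonneg_of_nonpos (by linarith) hA
      have h5 : 3 ≤ |S * B| := by rw [abs_mul, abs_of_nonneg (by linarith : 0 ≤ S)]; exact h3
      rcases le_abs.1 h5 with h6 | h6 <;> nlinarith
  obtain ⟨S, hS1, hS⟩ := hex
  obtain ⟨s, hs, hs0⟩ := intermediate_value_Icc' hS1 hcont.continuousOn
    (show (0 : ℝ) ∈ Set.Icc _ _ from ⟨hS, by linarith⟩)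
  exact ⟨s, hs.1, by linarith⟩

lemma aux_sq_real (p q A B : ℝ) (hA : A ≤ 0) (h : (B + 1) ^ 2 ≤ 4 * (A + 1)) :
    (max |p + 2 * q| |p - q| / 3) ^ 2 * (A ^ 2 + B ^ 2 - A * B) ≤
      max (q ^ 2 * A + p * q * B + (p ^ 2 + p * q + q ^ 2))
        ((p + q) ^ 2 * A - q * (p + q) * B + (p ^ 2 + p * q + q ^ 2)) := by
  have hD : 0 ≤ p ^ 2 + p * q + q ^ 2 := by
    nlinarith [sq_nonneg (p + q), sq_nonneg p, sq_nonneg q]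
  by_cases hne : A ≠ 0 ∨ B ≠ 0
  swap
  · push Not at hne
    obtain ⟨rfl, rfl⟩ := hne
    simp [hD]
  obtain ⟨s, hs1, hs⟩ := aux_AB A B hA h hne
  set t := (s * B + 1) / 2 with ht
  have htA : t ^ 2 = s * A + 1 := by rw [ht]; linarith
  have htB : 2 * t = s * B + 1 := by rw [ht]; ring
  have ht1 : t ^ 2 ≤ 1 := by
    rw [htA]; nlinarith
  obtain ⟨hta, htb⟩ := abs_le.1 ((sq_le_one_iff_abs_le_one t).1 ht1)
  have hr := aux_real p q t hta htb
  set C := max |p + 2 * q| |p - q| / 3 with hC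
  have hC0 : 0 ≤ C := by rw [hC]; positivity
  have hQ : (t ^ 2 - t + 1) ^ 2 = s ^ 2 * (A ^ 2 + B ^ 2 - A * B) := by
    have e1 : s * A = t ^ 2 - 1 := by linarith
    have e2 : s * B = 2 * t - 1 := by linarith
    have : s ^ 2 * (A ^ 2 + B ^ 2 - A * B) = (s * A) ^ 2 + (s * B) ^ 2 - (s * A) * (s * B) := by ring
    rw [this, e1, e2]; ring
  have hQ0 : 0 ≤ A ^ 2 + B ^ 2 - A * B := by nlinarith [sq_nonneg (A - B), sq_nonneg A, sq_nonneg B]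
  have hT0 : 0 ≤ t ^ 2 - t + 1 := by nlinarith [sq_nonneg (t - 1 / 2)]
  have gen : ∀ L : ℝ, C ^ 2 * (t ^ 2 - t + 1) ^ 2 ≤ s * L + (p ^ 2 + p * q + q ^ 2) →
      C ^ 2 * (A ^ 2 + B ^ 2 - A * B) ≤ L + (p ^ 2 + p * q + q ^ 2) := by
    intro L hL
    rw [hQ] at hL
    have hs0 : 0 < s := by linarith
    have h3 : 0 ≤ C ^ 2 * (A ^ 2 + B ^ 2 - A * B) := by positivity
    set K := C ^ 2 * (A ^ 2 + B ^ 2 - A * B)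
    have h4 : C ^ 2 * (s ^ 2 * (A ^ 2 + B ^ 2 - A * B)) = s * (s * K) := by ring
    rw [h4] at hL
    have h5 : s * K ≤ s * (s * K) := by nlinarith [mul_nonneg hs0.le h3]
    have h6 : s * K ≤ s * (L + (p ^ 2 + p * q + q ^ 2)) := by nlinarith
    exact le_of_mul_le_mul_left h6 hs0
  have hsq : C ^ 2 * (t ^ 2 - t + 1) ^ 2 ≤ (max |q * t + p| |(p + q) * t - q|) ^ 2 := by
    rw [← mul_pow]; exact pow_le_pow_left₀ (by positivity) hr 2
  rcases max_choice |q * t + p| |(p + q) * t - q| with hm | hm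
  · rw [hm, sq_abs] at hsq
    refine le_trans (gen (q ^ 2 * A + p * q * B) (hsq.trans (le_of_eq ?_))) (le_max_left _ _)
    linear_combination q ^ 2 * htA + p * q * htB
  · rw [hm, sq_abs] at hsq
    refine le_trans (gen ((p + q) ^ 2 * A - q * (p + q) * B) (hsq.trans (le_of_eq ?_)))
      (le_max_right _ _)
    linear_combination (p + q) ^ 2 * htA - q * (p + q) * htB

lemma aux_cpx1 (p q : ℝ) (z : ℂ) (hz : ‖z‖ ≤ 1) :
    max |p + 2 * q| |p - q| / 3 * ‖z ^ 2 - z + 1‖ ≤ max ‖q * z + p‖ ‖(p + q) * z - q‖ := by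
  obtain ⟨x, y⟩ := z
  have hn : x ^ 2 + y ^ 2 ≤ 1 := by
    have := pow_le_pow_left₀ (norm_nonneg _) hz 2
    rw [← Complex.normSq_eq_norm_sq, Complex.normSq_mk] at this
    nlinarith
  have key := aux_sq_real p q (x ^ 2 + y ^ 2 - 1) (2 * x - 1) (by linarith) (by nlinarith [sq_nonneg y])
  have e1 : ‖(⟨x, y⟩ : ℂ) ^ 2 - ⟨x, y⟩ + 1‖ ^ 2 = (x ^ 2 + y ^ 2 - 1) ^ 2 + (2 * x - 1) ^ 2 -
      (x ^ 2 + y ^ 2 - 1) * (2 * x - 1) := by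
    rw [← Complex.normSq_eq_norm_sq, Complex.normSq_apply]
    simp [pow_two]; ring
  have e2 : ‖(q : ℂ) * ⟨x, y⟩ + p‖ ^ 2 = q ^ 2 * (x ^ 2 + y ^ 2 - 1) + p * q * (2 * x - 1) +
      (p ^ 2 + p * q + q ^ 2) := by
    rw [← Complex.normSq_eq_norm_sq, Complex.normSq_apply]
    simp; ring
  have e3 : ‖((p : ℂ) + q) * ⟨x, y⟩ - q‖ ^ 2 = (p + q) ^ 2 * (x ^ 2 + y ^ 2 - 1) -
      q * (p + q) * (2 * x - 1) + (p ^ 2 + p * q + q ^ 2) := by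
    rw [← Complex.normSq_eq_norm_sq, Complex.normSq_apply]
    simp; ring
  rw [← e1, ← e2, ← e3, ← mul_pow] at key
  rcases le_max_iff.1 key with h | h
  · exact le_max_of_le_left (le_of_sq_le_sq h (norm_nonneg _))
  · exact le_max_of_le_right (le_of_sq_le_sq h (norm_nonneg _))

lemma aux_cpx (p q : ℝ) (z : ℂ) :
    max |p + 2 * q| |p - q| / 3 * ‖z ^ 2 - z + 1‖ ≤
      max ‖z‖ 1 * max ‖q * z + p‖ ‖(p + q) * z - q‖ := by
  rcases le_total ‖z‖ 1 with h | h
  · rw [max_eq_right h, one_mul]; exact aux_cpx1 p q z h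
  · rw [max_eq_left h]
    have hz0 : z ≠ 0 := by rintro rfl; simp at h; linarith
    have hpos : 0 < ‖z‖ := norm_pos_iff.2 hz0
    have := aux_cpx1 (p + q) (-q) z⁻¹ (by rw [norm_inv]; exact inv_le_one_of_one_le₀ h)
    have e1 : ‖z‖ ^ 2 * ‖z⁻¹ ^ 2 - z⁻¹ + 1‖ = ‖z ^ 2 - z + 1‖ := by
      rw [← norm_pow, ← norm_mul]; congr 1; field_simp; ring
    have e2 : ‖z‖ * ‖((-q : ℝ) : ℂ) * z⁻¹ + ((p + q : ℝ) : ℂ)‖ = ‖((p : ℂ) + q) * z - q‖ := by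
      rw [← norm_mul]; congr 1; push_cast; field_simp; ring
    have e3 : ‖z‖ * ‖(((p + q : ℝ) : ℂ) + ((-q : ℝ) : ℂ)) * z⁻¹ - ((-q : ℝ) : ℂ)‖ = ‖(q : ℂ) * z + p‖ := by
      rw [← norm_mul]; congr 1; push_cast; field_simp; ring
    have e4 : p + q + 2 * -q = p - q := by ring
    have e5 : p + q - -q = p + 2 * q := by ring
    rw [e4, e5, max_comm |p - q|] at this
    have h2 := mul_le_mul_of_nonneg_left this (sq_nonneg ‖z‖)
    rw [max_comm ‖(q : ℂ) * z + p‖, ← e1, ← e2, ← e3, ← mul_max_of_nonneg _ _ hpos.le]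
    calc _ = _ := by ring
      _ ≤ _ := h2
      _ = _ := by ring

lemma aux_gauss (V : ValuationSubring ℂ) (s : Multiset (ℂ × ℂ)) (hs : ∀ x ∈ s, x.1 ≠ 0 ∨ x.2 ≠ 0) :
    ∃ t : ℂ, ∃ G : V[X], G.map (IsLocalRing.residue V) ≠ 0 ∧
      (s.map fun x => C x.1 * X + C x.2).prod = C t * G.map V.subtype ∧
      V.valuation t = (s.map fun x => max (V.valuation x.1) (V.valuation x.2)).prod := by
  induction s using Multiset.induction_on with
  | empty => exact ⟨1, 1, by simp, by simp, by simp⟩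
  | cons x s ih =>
    obtain ⟨t, G, hG, hP, ht⟩ := ih (fun y hy => hs y (Multiset.mem_cons_of_mem hy))
    have hx := hs x (Multiset.mem_cons_self _ _)
    obtain ⟨t1, G1, hG1, hP1, ht1⟩ : ∃ t : ℂ, ∃ G : V[X], G.map (IsLocalRing.residue V) ≠ 0 ∧
      C x.1 * X + C x.2 = C t * G.map V.subtype ∧
      V.valuation t = max (V.valuation x.1) (V.valuation x.2) := by
      rcases le_total (V.valuation x.1) (V.valuation x.2) with h | h
      · have h2 : x.2 ≠ 0 := by
          intro h2
          rw [h2, map_zero] at h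
          have := (Valuation.zero_iff _).1 (le_antisymm h zero_le)
          tauto
        obtain ⟨a, ha⟩ := (V.valuation_le_iff _ _).1 h
        refine ⟨x.2, C a * X + 1, ?_, ?_, (max_eq_right h).symm⟩
        · intro h0
          have := congrArg (fun P => P.coeff 0) h0
          simp at this
        · simp only [Polynomial.map_add, Polynomial.map_mul, Polynomial.map_C, Polynomial.map_X, Polynomial.map_one]
          rw [← ha]
          simp only [C_mul, ValuationSubring.subtype_apply]; ring
      · have h2 : x.1 ≠ 0 := by
          intro h2
          rw [h2, map_zero] at h
          have := (Valuation.zero_iff _).1 (le_antisymm h zero_le)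
          tauto
        obtain ⟨a, ha⟩ := (V.valuation_le_iff _ _).1 h
        refine ⟨x.1, X + C a, ?_, ?_, (max_eq_left h).symm⟩
        · intro h0
          have := congrArg (fun P => P.coeff 1) h0
          simp at this
        · simp only [Polynomial.map_add, Polynomial.map_C, Polynomial.map_X]
          rw [← ha]
          simp only [C_mul, ValuationSubring.subtype_apply]; ring
    refine ⟨t1 * t, G1 * G, ?_, ?_, ?_⟩
    · rw [Polynomial.map_mul]; exact mul_ne_zero hG1 hG
    · rw [Multiset.map_cons, Multiset.prod_cons, hP, hP1, Polynomial.map_mul, C_mul]; ring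
    · rw [Multiset.map_cons, Multiset.prod_cons, map_mul, ht, ht1]

lemma aux_gauss_le (V : ValuationSubring ℂ) (s : Multiset (ℂ × ℂ))
    (hs : ∀ x ∈ s, x.1 ≠ 0 ∨ x.2 ≠ 0) (a : ℂ)
    (h : ∀ i, (C a * (s.map fun x => C x.1 * X + C x.2).prod).coeff i ∈ V) :
    V.valuation a * (s.map fun x => max (V.valuation x.1) (V.valuation x.2)).prod ≤ 1 := by
  obtain ⟨t, G, hG, hP, ht⟩ := aux_gauss V s hs
  rw [hP] at h
  rw [← ht]
  obtain ⟨i, hi⟩ : ∃ i, (G.map (IsLocalRing.residue V)).coeff i ≠ 0 := by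
    by_contra hcon
    push Not at hcon
    exact hG (Polynomial.ext (by simpa using hcon))
  rw [Polynomial.coeff_map] at hi
  have hu : IsUnit (G.coeff i) := (IsLocalRing.residue_ne_zero_iff_isUnit _).1 hi
  have h1 := (V.valuation_eq_one_iff _).1 hu
  have h2 := (V.valuation_le_one_iff _).2 (h i)
  simp only [coeff_C_mul, Polynomial.coeff_map, map_mul, ValuationSubring.subtype_apply, h1,
    mul_one] at h2
  exact h2

lemma aux_int_of_val (x : ℂ) (r : ℚ) (hr : x = r) (h : ∀ V : ValuationSubring ℂ, x ∈ V) :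
    ∃ m : ℤ, x = m := by
  have h1 : x ∈ (integralClosure (Subring.closure (∅ : Set ℂ)) ℂ).toSubring := by
    rw [← iInf_valuationSubring_superset]
    simp only [Subring.mem_iInf]
    intro V
    exact h V.1
  have h2 : IsIntegral (Subring.closure (∅ : Set ℂ)) x := h1
  have h3 : Algebra.IsIntegral ℤ (Subring.closure (∅ : Set ℂ)) := by
    constructor
    rintro ⟨y, hy⟩
    rw [Subring.closure_empty, Subring.mem_bot] at hy
    obtain ⟨n, rfl⟩ := hy
    convert isIntegral_algebraMap (R := ℤ) (x := n)
    simp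
  have h4 : IsIntegral ℤ x := isIntegral_trans x h2
  rw [hr] at h4
  have h5 : IsIntegral ℤ r := by
    rw [← isIntegral_algebraMap_iff (algebraMap ℚ ℂ).injective]; simpa using h4
  obtain ⟨m, hm⟩ := IsIntegrallyClosed.isIntegral_iff.1 h5
  exact ⟨m, by rw [hr, ← hm]; simp⟩

lemma aux_M_eq (f : ℤ[X]) :
    _root_.mahlerMeasure f = (f.map (Int.castRingHom ℂ)).mahlerMeasure := by
  rw [mahlerMeasure_eq_leadingCoeff_mul_prod_roots, _root_.mahlerMeasure,
    leadingCoeff_map_of_injective (RingHom.injective_int _)]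
  simp [max_comm]

lemma aux_map (α : ℂ) (hα : IsAlgebraic ℚ α) : ∃ r : ℚ, r ≠ 0 ∧
    (intMinpoly α).map (Int.castRingHom ℚ) = C r * minpoly ℚ α := by
  have hm : minpoly ℚ α ≠ 0 := minpoly.ne_zero hα.isIntegral
  set N := IsLocalization.integerNormalization (nonZeroDivisors ℤ) (minpoly ℚ α) with hN
  obtain ⟨b, hb, hbN⟩ := IsLocalization.integerNormalization_spec (nonZeroDivisors ℤ) (minpoly ℚ α)
  have hb0 : b ≠ 0 := nonZeroDivisors.ne_zero hb
  have hN0 : N ≠ 0 := by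
    rw [hN, Ne, IsFractionRing.integerNormalization_eq_zero_iff]; exact hm
  have hc0 : N.content ≠ 0 := by rwa [Ne, content_eq_zero_iff]
  have h1 : N.map (Int.castRingHom ℚ) = C (b : ℚ) * minpoly ℚ α := by
    have : algebraMap ℤ ℚ = Int.castRingHom ℚ := rfl
    rw [← this, hN, hbN]
    ext i
    simp [Algebra.smul_def]
  have h2 : N.map (Int.castRingHom ℚ) = C (N.content : ℚ) * (intMinpoly α).map (Int.castRingHom ℚ) := by
    conv_lhs => rw [eq_C_content_mul_primPart N]
    rw [Polynomial.map_mul, Polynomial.map_C]; rfl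
  have hcq : (N.content : ℚ) ≠ 0 := by exact_mod_cast hc0
  have hbq : (b : ℚ) ≠ 0 := by exact_mod_cast hb0
  refine ⟨b / N.content, div_ne_zero hbq hcq, ?_⟩
  have h3 : C (N.content : ℚ) * (intMinpoly α).map (Int.castRingHom ℚ) =
      C (N.content : ℚ) * (C (b / N.content : ℚ) * minpoly ℚ α) := by
    rw [← h2, h1, ← mul_assoc, ← C_mul, mul_div_cancel₀ _ hcq]
  exact mul_left_cancel₀ (by simpa using hcq) h3

lemma aux_natDegree (α : ℂ) (hα : IsAlgebraic ℚ α) :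
    (intMinpoly α).natDegree = (minpoly ℚ α).natDegree := by
  obtain ⟨r, hr, h⟩ := aux_map α hα
  have := congrArg natDegree h
  rwa [natDegree_map_eq_of_injective (RingHom.injective_int _), natDegree_C_mul hr] at this

lemma aux_aeval (α x : ℂ) (hα : IsAlgebraic ℚ α) :
    aeval x (intMinpoly α) = 0 ↔ aeval x (minpoly ℚ α) = 0 := by
  obtain ⟨r, hr, h⟩ := aux_map α hα
  have : aeval x (intMinpoly α) = aeval x ((intMinpoly α).map (Int.castRingHom ℚ)) :=
    (aeval_map_algebraMap ℚ x (intMinpoly α)).symm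
  rw [this, h]
  simp [hr]

lemma aux_dvd (α : ℂ) (hα : IsAlgebraic ℚ α) (H : ℤ[X]) (hH : aeval α H = 0) :
    intMinpoly α ∣ H := by
  have hprim : (intMinpoly α).IsPrimitive := isPrimitive_primPart _
  rw [IsPrimitive.Int.dvd_iff_map_cast_dvd_map_cast _ _ hprim]
  obtain ⟨r, hr, h⟩ := aux_map α hα
  rw [h]
  have h1 : minpoly ℚ α ∣ H.map (Int.castRingHom ℚ) := by
    apply minpoly.dvd
    rw [← hH]; exact aeval_map_algebraMap ℚ α H
  exact ((isUnit_C.2 hr.isUnit).mul_left_dvd).2 h1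

lemma aux_ne_zero (α : ℂ) : intMinpoly α ≠ 0 := primPart_ne_zero _

lemma aux_eq_mul (α : ℂ) (hα : IsAlgebraic ℚ α) (H : ℤ[X]) (hH : aeval α H = 0) (h0 : H ≠ 0)
    (hd : H.natDegree ≤ (minpoly ℚ α).natDegree) :
    ∃ k : ℤ, k ≠ 0 ∧ H = C k * intMinpoly α := by
  obtain ⟨K, hK⟩ := aux_dvd α hα H hH
  have hK0 : K ≠ 0 := by rintro rfl; simp [h0] at hK
  have := congrArg natDegree hK
  rw [natDegree_mul (aux_ne_zero α) hK0, aux_natDegree α hα] at this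
  have hdeg : K.natDegree = 0 := by omega
  rw [natDegree_eq_zero] at hdeg
  obtain ⟨k, rfl⟩ := hdeg
  exact ⟨k, by rintro rfl; simp at hK0, by rw [hK, mul_comm]⟩

lemma aux_height_rat (m n : ℤ) (hmn : IsCoprime m n) (hn : n ≠ 0) :
    height ((m : ℂ) / n) = Real.log (max |(m : ℝ)| |(n : ℝ)|) := by
  have hnc : (n : ℂ) ≠ 0 := by exact_mod_cast hn
  have hr : ((m : ℂ) / n) = algebraMap ℚ ℂ ((m : ℚ) / n) := by simp
  have halg : IsAlgebraic ℚ ((m : ℂ) / n) := by rw [hr]; exact isAlgebraic_algebraMap _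
  have hdeg : (minpoly ℚ ((m : ℂ) / n)).natDegree = 1 := by
    rw [hr, minpoly.eq_X_sub_C]; simp
  obtain ⟨k, hk0, hk⟩ := aux_eq_mul _ halg (C n * X + C (-m)) (by simp; field_simp; ring) (by
      intro h; have := congrArg (fun P => coeff P 1) h; simp only [coeff_add, coeff_C_mul, coeff_X_one, coeff_C_succ, coeff_zero] at this; simp [hn] at this)
    (by rw [hdeg]; exact natDegree_linear_le)
  have hku : |k| = 1 := by
    have h1 : k ∣ n := by
      have := congrArg (fun P => coeff P 1) hk
      simp only [coeff_C_mul, coeff_add, coeff_X_one, coeff_C_succ] at this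
      exact ⟨_, by simpa using this⟩
    have h2 : k ∣ m := by
      have := congrArg (fun P => coeff P 0) hk
      simp only [coeff_C_mul, coeff_add, coeff_X_zero, coeff_C_zero] at this
      rw [← dvd_neg]
      exact ⟨_, by simpa using this⟩
    exact Int.isUnit_iff_abs_eq.1 (hmn.isUnit_of_dvd' h2 h1)
  have hM : _root_.mahlerMeasure (C n * X + C (-m)) = _root_.mahlerMeasure (intMinpoly ((m : ℂ) / n)) := by
    rw [aux_M_eq, aux_M_eq, hk, Polynomial.map_mul, mahlerMeasure_mul, Polynomial.map_C,
      mahlerMeasure_const]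
    have : ‖(Int.castRingHom ℂ) k‖ = 1 := by
      simp only [eq_intCast, Complex.norm_intCast]; exact_mod_cast hku
    rw [this, one_mul]
  rw [height, hdeg, ← hM, aux_M_eq]
  simp only [Polynomial.map_add, Polynomial.map_mul, Polynomial.map_C, Polynomial.map_X]
  rw [mahlerMeasure_C_mul_X_add_C (by simpa using hn)]
  simp only [eq_intCast, Nat.cast_one, div_one, Int.cast_neg]
  congr 1
  rw [max_comm, norm_neg, Complex.norm_intCast, Complex.norm_intCast]

lemma aux_height_zero : height 0 = 0 := by
  have := aux_height_rat 0 1 isCoprime_one_right one_ne_zero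
  simpa using this

/-- the transformed polynomial -/
noncomputable def auxTrans (p q : ℤ) (f : ℤ[X]) : ℤ[X] :=
  ∑ i ∈ Finset.range (f.natDegree + 1),
    C (f.coeff i) * (C q * X + C p) ^ i * (C (p + q) * X - C q) ^ (f.natDegree - i)

lemma auxTrans_degree (p q : ℤ) (f : ℤ[X]) : (auxTrans p q f).natDegree ≤ f.natDegree := by
  refine natDegree_sum_le_of_forall_le _ _ ?_
  intro i hi
  have hi' : i ≤ f.natDegree := by simpa [Nat.lt_succ_iff] using hi
  have h1 : (C q * X + C p : ℤ[X]).natDegree ≤ 1 := natDegree_linear_le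
  have h2 : (C (p + q) * X - C q : ℤ[X]).natDegree ≤ 1 := by
    rw [sub_eq_add_neg, ← C_neg]; exact natDegree_linear_le
  calc _ ≤ (C (f.coeff i) * (C q * X + C p) ^ i : ℤ[X]).natDegree +
          ((C (p + q) * X - C q : ℤ[X]) ^ (f.natDegree - i)).natDegree := natDegree_mul_le
    _ ≤ i * 1 + (f.natDegree - i) * 1 := by
        gcongr
        · exact (natDegree_C_mul_le _ _).trans (natDegree_pow_le_of_le _ h1)
        · exact natDegree_pow_le_of_le _ h2
    _ = _ := by omega

lemma aux_hom (f : ℂ[X]) (u v : ℂ) :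
    ∑ i ∈ Finset.range (f.natDegree + 1), f.coeff i * u ^ i * v ^ (f.natDegree - i) =
      f.leadingCoeff * (f.roots.map fun z => u - z * v).prod := by
  have hcard : f.roots.card = f.natDegree := (IsAlgClosed.splits f).natDegree_eq_card_roots.symm
  by_cases hv : v = 0
  · subst hv
    rw [Finset.sum_eq_single f.natDegree]
    · simp [hcard]
    · intro i hi hne
      have : i < f.natDegree := by
        have := Finset.mem_range.1 hi; omega
      rw [zero_pow (by omega), mul_zero]
    · simp
  · have h1 : ∑ i ∈ Finset.range (f.natDegree + 1), f.coeff i * u ^ i * v ^ (f.natDegree - i) =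
        v ^ f.natDegree * f.eval (u / v) := by
      rw [eval_eq_sum_range, Finset.mul_sum]
      refine Finset.sum_congr rfl fun i hi => ?_
      have hi' : i ≤ f.natDegree := by simpa [Nat.lt_succ_iff] using hi
      rw [div_pow, ← Nat.sub_add_cancel hi', pow_add, Nat.add_sub_cancel]
      field_simp
    rw [h1, (IsAlgClosed.splits f).eval_eq_prod_roots, ← hcard, mul_left_comm]
    congr 1
    rw [← Multiset.prod_replicate, ← Multiset.map_const', ← Multiset.prod_map_mul]
    congr 1
    refine Multiset.map_congr rfl fun z _ => ?_
    field_simp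

lemma auxTrans_map (p q : ℤ) (f : ℤ[X]) :
    (auxTrans p q f).map (Int.castRingHom ℂ) = C (f.leadingCoeff : ℂ) *
      ((f.map (Int.castRingHom ℂ)).roots.map fun z =>
        C ((q : ℂ) - (p + q) * z) * X + C ((p : ℂ) + q * z)).prod := by
  apply Polynomial.funext
  intro x
  have h := aux_hom (f.map (Int.castRingHom ℂ)) (q * x + p) ((p + q) * x - q)
  rw [natDegree_map_eq_of_injective (RingHom.injective_int _),
    leadingCoeff_map_of_injective (RingHom.injective_int _)] at h
  rw [auxTrans, Polynomial.map_sum, eval_finsetSum, eval_mul, eval_C, eval_multiset_prod,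
    Multiset.map_map]
  simp only [Polynomial.coeff_map, eq_intCast] at h
  convert h using 1
  · refine Finset.sum_congr rfl fun i _ => ?_
    simp
  · congr 2
    refine Multiset.map_congr rfl fun z _ => ?_
    simp; ring

lemma auxTrans_aeval (p q : ℤ) (f : ℤ[X]) (x y : ℂ) (hy : aeval y f = 0) (hf : f ≠ 0)
    (h : ((q : ℂ) - (p + q) * y) * x + (p + q * y) = 0) : aeval x (auxTrans p q f) = 0 := by
  have e : aeval x (auxTrans p q f) = eval x ((auxTrans p q f).map (Int.castRingHom ℂ)) := by
    rw [eval_map, aeval_def]; rfl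
  rw [e, auxTrans_map, eval_mul, eval_multiset_prod, Multiset.map_map]
  apply mul_eq_zero_of_right
  apply Multiset.prod_eq_zero
  rw [Multiset.mem_map]
  refine ⟨y, ?_, by simpa using h⟩
  rw [mem_roots ((Polynomial.map_ne_zero_iff (RingHom.injective_int _)).2 hf), IsRoot.def, eval_map]
  rw [aeval_def] at hy; exact hy

lemma aux_D (p q : ℤ) (hq : q ≠ 0) : p ^ 2 + p * q + q ^ 2 ≠ 0 := by
  have : 0 < q ^ 2 := by positivity
  nlinarith [sq_nonneg (2 * p + q)]

lemma aux_lin_ne (p q : ℤ) (hq : q ≠ 0) (z : ℂ) :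
    (q : ℂ) - (p + q) * z ≠ 0 ∨ (p : ℂ) + q * z ≠ 0 := by
  by_contra! h
  have hD := aux_D p q hq
  have : ((p ^ 2 + p * q + q ^ 2 : ℤ) : ℂ) = 0 := by
    push_cast
    linear_combination (q : ℂ) * h.1 + (p + q) * h.2
  exact hD (by exact_mod_cast this)

lemma auxTrans_ne_zero (p q : ℤ) (hq : q ≠ 0) (f : ℤ[X]) (hf : f ≠ 0) : auxTrans p q f ≠ 0 := by
  intro h0
  have h := auxTrans_map p q f
  rw [h0, Polynomial.map_zero] at h
  have h := h.symm
  rw [mul_eq_zero, Multiset.prod_eq_zero_iff, Multiset.mem_map] at h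
  rcases h with h | ⟨z, _, hz⟩
  · simp [hf] at h
  · have a1 := congrArg (fun P => coeff P 1) hz
    have a0 := congrArg (fun P => coeff P 0) hz
    simp only [coeff_add, coeff_C_mul, coeff_X_one, coeff_C_succ, coeff_zero, coeff_X_zero,
      coeff_C_zero, mul_one, mul_zero, add_zero, zero_add] at a1 a0
    rcases aux_lin_ne p q hq z with h | h <;> contradiction

lemma aux_alg_iff (p q : ℤ) (hq : q ≠ 0) (α β : ℂ) (hα : IsAlgebraic ℚ α)
    (h : ((q : ℂ) - (p + q) * α) * β + (p + q * α) = 0) :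
    IsAlgebraic ℚ β ∧ (minpoly ℚ β).natDegree ≤ (minpoly ℚ α).natDegree := by
  have h0 : aeval β (auxTrans p q (intMinpoly α)) = 0 :=
    auxTrans_aeval p q _ β α ((aux_aeval α α hα).2 (minpoly.aeval ℚ α)) (aux_ne_zero α) h
  have hne := auxTrans_ne_zero p q hq _ (aux_ne_zero α)
  have hdeg := auxTrans_degree p q (intMinpoly α)
  rw [aux_natDegree α hα] at hdeg
  set F := auxTrans p q (intMinpoly α)
  have h1 : aeval β (F.map (algebraMap ℤ ℚ)) = 0 := by
    rw [aeval_map_algebraMap]; exact h0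
  have hne1 : F.map (algebraMap ℤ ℚ) ≠ 0 :=
    (Polynomial.map_ne_zero_iff (RingHom.injective_int _)).2 hne
  refine ⟨⟨_, hne1, h1⟩, ?_⟩
  calc _ ≤ (F.map (algebraMap ℤ ℚ)).natDegree := natDegree_le_of_dvd (minpoly.dvd ℚ β h1) hne1
    _ ≤ F.natDegree := natDegree_map_le
    _ ≤ _ := hdeg

lemma aux_omega (α ω ω' : ℂ) (hs : ω + ω' = 1) (hp : ω * ω' = 1) (hα : IsAlgebraic ℚ α)
    (h1 : α ≠ ω) (h2 : α ≠ ω') : aeval ω (intMinpoly α) ≠ 0 := by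
  rw [Ne, aux_aeval α ω hα]
  intro h
  have hmin : minpoly ℚ α = minpoly ℚ ω :=
    minpoly.eq_of_irreducible_of_monic (minpoly.irreducible hα.isIntegral) h
      (minpoly.monic hα.isIntegral)
  have hd : minpoly ℚ ω ∣ X ^ 2 - X + 1 := by
    apply minpoly.dvd
    simp only [map_add, map_sub, map_pow, aeval_X, map_one]
    linear_combination ω * hs - hp
  rw [← hmin] at hd
  have h3 := aeval_eq_zero_of_dvd_aeval_eq_zero hd (minpoly.aeval ℚ α)
  simp only [map_add, map_sub, map_pow, aeval_X, map_one] at h3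
  have : (α - ω) * (α - ω') = 0 := by linear_combination h3 - α * hs + hp
  rcases mul_eq_zero.1 this with h | h
  · exact h1 (sub_eq_zero.1 h)
  · exact h2 (sub_eq_zero.1 h)

lemma aux_res (f : ℤ[X]) (ω ω' : ℂ) (hs : ω + ω' = 1) (hp : ω * ω' = 1) :
    ∃ N : ℤ, aeval ω f * aeval ω' f = N ∧
      (N : ℂ) = (f.leadingCoeff : ℂ) ^ 2 *
        ((f.map (Int.castRingHom ℂ)).roots.map fun z => z ^ 2 - z + 1).prod := by
  have hmon : (X ^ 2 - X + 1 : ℤ[X]).Monic := by monicity!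
  have hdeg : (X ^ 2 - X + 1 : ℤ[X]).natDegree = 2 := by compute_degree!
  set r := f %ₘ (X ^ 2 - X + 1) with hr
  have hrd : r.natDegree < 2 := by
    rw [← hdeg]; exact natDegree_modByMonic_lt _ hmon (by intro h; rw [h] at hdeg; simp at hdeg)
  have hrlin : r = C (r.coeff 1) * X + C (r.coeff 0) := eq_X_add_C_of_natDegree_le_one (by omega)
  have ev : ∀ x : ℂ, x ^ 2 - x + 1 = 0 → aeval x f = r.coeff 1 * x + r.coeff 0 := by
    intro x hx
    have h1 := congrArg (aeval x) (modByMonic_add_div f (X ^ 2 - X + 1))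
    simp only [map_add, map_mul, map_sub, map_pow, aeval_X, map_one, hx, zero_mul, add_zero] at h1
    rw [← h1, ← hr]
    conv_lhs => rw [hrlin]
    simp
  have e1 := ev ω (by linear_combination ω * hs - hp)
  have e2 := ev ω' (by linear_combination ω' * hs - hp)
  refine ⟨(r.coeff 1) ^ 2 + r.coeff 1 * r.coeff 0 + r.coeff 0 ^ 2, ?_, ?_⟩
  · rw [e1, e2]; push_cast
    linear_combination (r.coeff 1 : ℂ) ^ 2 * hp + r.coeff 1 * r.coeff 0 * hs
  · have e3 : aeval ω f * aeval ω' f = (f.leadingCoeff : ℂ) ^ 2 *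
        ((f.map (Int.castRingHom ℂ)).roots.map fun z => z ^ 2 - z + 1).prod := by
      have ev2 : ∀ x : ℂ, aeval x f = (f.leadingCoeff : ℂ) *
          ((f.map (Int.castRingHom ℂ)).roots.map fun z => x - z).prod := by
        intro x
        have h1 : aeval x f = eval x (f.map (Int.castRingHom ℂ)) := by
          rw [eval_map, aeval_def]; rfl
        rw [h1, (IsAlgClosed.splits _).eval_eq_prod_roots,
          leadingCoeff_map_of_injective (RingHom.injective_int _)]
        rfl
      rw [ev2 ω, ev2 ω']
      have : ∀ A B D : ℂ, A * B * (A * D) = A ^ 2 * (B * D) := by intros; ring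
      rw [this, ← Multiset.prod_map_mul]
      congr 2
      refine Multiset.map_congr rfl fun z _ => ?_
      linear_combination hp - z * hs
    rw [← e3, e1, e2]; push_cast
    linear_combination -(r.coeff 1 : ℂ) ^ 2 * hp - r.coeff 1 * r.coeff 0 * hs

lemma aux_prod_le {Γ : Type*} [LinearOrderedCommGroupWithZero Γ] (s : Multiset ℂ) (f g : ℂ → Γ)
    (h : ∀ z, f z ≤ g z) : (s.map f).prod ≤ (s.map g).prod := by
  induction s using Multiset.induction_on with
  | empty => simp
  | cons x s ih =>
    simp only [Multiset.map_cons, Multiset.prod_cons]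
    exact mul_le_mul' (h x) ih

lemma aux_prod_le_real (s : Multiset ℂ) (f g : ℂ → ℝ) (h0 : ∀ z, 0 ≤ f z)
    (h : ∀ z, f z ≤ g z) : 0 ≤ (s.map f).prod ∧ (s.map f).prod ≤ (s.map g).prod := by
  induction s using Multiset.induction_on with
  | empty => simp
  | cons x s ih =>
    simp only [Multiset.map_cons, Multiset.prod_cons]
    exact ⟨mul_nonneg (h0 x) ih.1, mul_le_mul (h x) ih.2 ih.1 ((h0 x).trans (h x))⟩

lemma aux_val_le (V : ValuationSubring ℂ) (p q u v : ℤ) (huv : u * p + v * q = 1) (z : ℂ) :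
    V.valuation (z ^ 2 - z + 1) ≤ max (V.valuation 1) (V.valuation (-z)) *
      max (V.valuation ((q : ℂ) - (p + q) * z)) (V.valuation ((p : ℂ) + q * z)) := by
  have hint : ∀ n : ℤ, V.valuation (n : ℂ) ≤ 1 := fun n =>
    (V.valuation_le_one_iff _).2 (intCast_mem V n)
  have huv' : (u : ℂ) * p + v * q = 1 := by exact_mod_cast huv
  have e : z ^ 2 - z + 1 = (((v - u : ℤ) : ℂ) * z + (u : ℤ)) * ((p : ℂ) + q * z) +
      (((-u : ℤ) : ℂ) * z + (v : ℤ)) * ((q : ℂ) - (p + q) * z) := by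
    push_cast
    linear_combination -(z ^ 2 - z + 1) * huv'
  have lin : ∀ m n : ℤ, V.valuation ((m : ℂ) * z + n) ≤ max (V.valuation 1) (V.valuation (-z)) := by
    intro m n
    refine (V.valuation.map_add _ _).trans (max_le ?_ ?_)
    · rw [map_mul, Valuation.map_neg]
      exact le_max_of_le_right (by simpa using mul_le_mul_left (hint m) (V.valuation z))
    · exact le_max_of_le_left (by rw [map_one]; exact hint n)
  rw [e]
  refine (V.valuation.map_add _ _).trans (max_le ?_ ?_)
  · rw [map_mul]; exact mul_le_mul' (lin _ _) (le_max_right _ _)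
  · rw [map_mul]; exact mul_le_mul' (lin _ _) (le_max_left _ _)

lemma aux_main (p q : ℤ) (hpq : IsCoprime p q) (hq : q ≠ 0) (α β ω ω' : ℂ) (hs : ω + ω' = 1)
    (hp : ω * ω' = 1) (hα : IsAlgebraic ℚ α) (h1 : α ≠ ω) (h2 : α ≠ ω')
    (hαβ : ((q : ℂ) - (p + q) * α) * β + (p + q * α) = 0) :
    (max |(p : ℝ) + 2 * q| |(p : ℝ) - q| / 3) ^ (minpoly ℚ α).natDegree ≤
      _root_.mahlerMeasure (intMinpoly α) * _root_.mahlerMeasure (intMinpoly β) ∧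
    (minpoly ℚ β).natDegree = (minpoly ℚ α).natDegree := by
  obtain ⟨hβ, hd1⟩ := aux_alg_iff p q hq α β hα hαβ
  obtain ⟨-, hd2⟩ := aux_alg_iff p q hq β α hβ (by linear_combination hαβ)
  have hdeg : (minpoly ℚ β).natDegree = (minpoly ℚ α).natDegree := le_antisymm hd1 hd2
  refine ⟨?_, hdeg⟩
  set f := intMinpoly α with hf
  have hf0 : f ≠ 0 := aux_ne_zero α
  have hroot : aeval β (auxTrans p q f) = 0 :=
    auxTrans_aeval p q _ β α ((aux_aeval α α hα).2 (minpoly.aeval ℚ α)) (aux_ne_zero α) hαβ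
  obtain ⟨k, hk0, hk⟩ := aux_eq_mul β hβ _ hroot (auxTrans_ne_zero p q hq f hf0)
    (by rw [hdeg, ← aux_natDegree α hα]; exact auxTrans_degree p q f)
  set g := intMinpoly β with hg
  have hkc : (k : ℂ) ≠ 0 := by exact_mod_cast hk0
  have hmap := auxTrans_map p q f
  have hfmap : f.map (Int.castRingHom ℂ) = C (f.leadingCoeff : ℂ) *
      ((f.map (Int.castRingHom ℂ)).roots.map fun z => X - C z).prod := by
    have := (IsAlgClosed.splits (f.map (Int.castRingHom ℂ))).eq_prod_roots
    rwa [leadingCoeff_map_of_injective (RingHom.injective_int _)] at this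
  have hcard : (f.map (Int.castRingHom ℂ)).roots.card = (minpoly ℚ α).natDegree := by
    rw [← aux_natDegree α hα, ← (IsAlgClosed.splits _).natDegree_eq_card_roots,
      natDegree_map_eq_of_injective (RingHom.injective_int _)]
  obtain ⟨N, hN1, hN2⟩ := aux_res f ω ω' hs hp
  set s := (f.map (Int.castRingHom ℂ)).roots with hsdef
  set a := (f.leadingCoeff : ℂ) with ha
  rw [hk, Polynomial.map_mul, Polynomial.map_C, eq_intCast] at hmap
  have hgmap : g.map (Int.castRingHom ℂ) = C (a / k) *
      (s.map fun z => C ((q : ℂ) - (p + q) * z) * X + C ((p : ℂ) + q * z)).prod := by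
    have : C (k : ℂ) * g.map (Int.castRingHom ℂ) = C (k : ℂ) * (C (a / k) *
      (s.map fun z => C ((q : ℂ) - (p + q) * z) * X + C ((p : ℂ) + q * z)).prod) := by
      rw [hmap, ← mul_assoc, ← C_mul, mul_div_cancel₀ _ hkc]
    exact mul_left_cancel₀ (by simpa using hkc) this
  have hN0 : N ≠ 0 := by
    rintro rfl
    have h3 := aux_omega α ω ω' hs hp hα h1 h2
    have h4 := aux_omega α ω' ω (by rw [add_comm, hs]) (by rw [mul_comm, hp]) hα h2 h1
    rw [← hf] at h3 h4
    simp [h3, h4] at hN1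
  -- integrality
  obtain ⟨u, v, huv⟩ := hpq
  have hmem : ∀ V : ValuationSubring ℂ, (N : ℂ) / k ∈ V := by
    intro V
    rw [← V.valuation_le_one_iff]
    have i1 := aux_gauss_le V (s.map fun z => ((1 : ℂ), -z)) (by
      intro x hx; obtain ⟨z, -, rfl⟩ := Multiset.mem_map.1 hx; simp) a (by
      intro i
      have : C a * ((s.map fun z => ((1 : ℂ), -z)).map fun x => C x.1 * X + C x.2).prod =
          f.map (Int.castRingHom ℂ) := by
        rw [hfmap, Multiset.map_map]; congr 2
        refine Multiset.map_congr rfl fun z _ => ?_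
        simp [sub_eq_add_neg]
      rw [this, Polynomial.coeff_map]
      exact intCast_mem V _)
    have i2 := aux_gauss_le V (s.map fun z => ((q : ℂ) - (p + q) * z, (p : ℂ) + q * z)) (by
      intro x hx; obtain ⟨z, -, rfl⟩ := Multiset.mem_map.1 hx
      exact aux_lin_ne p q hq z) (a / k) (by
      intro i
      rw [Multiset.map_map]
      have := congrArg (fun P => coeff P i) hgmap
      simp only [Polynomial.coeff_map] at this
      have h3 := intCast_mem V (g.coeff i)
      rw [eq_intCast] at this
      rw [this] at h3
      exact h3)
    rw [Multiset.map_map] at i1 i2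
    have e : (N : ℂ) / k = a * (a / k) * (s.map fun z => z ^ 2 - z + 1).prod := by
      rw [hN2]; ring
    rw [e, map_mul, map_mul, map_multiset_prod, Multiset.map_map]
    refine le_trans ?_ (mul_le_one' i1 i2)
    rw [mul_mul_mul_comm, ← Multiset.prod_map_mul]
    refine mul_le_mul' le_rfl (aux_prod_le _ _ _ fun z => ?_)
    exact aux_val_le V p q u v huv z
  obtain ⟨m, hm⟩ := aux_int_of_val ((N : ℂ) / k) ((N : ℚ) / k) (by push_cast; rfl) hmem
  have hm0 : m ≠ 0 := by
    rintro rfl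
    rw [Int.cast_zero, div_eq_zero_iff] at hm
    rcases hm with h | h
    · exact hN0 (by exact_mod_cast h)
    · exact hkc h
  have hnorm : 1 ≤ ‖(N : ℂ) / k‖ := by
    rw [hm, Complex.norm_intCast]
    exact_mod_cast Int.one_le_abs hm0
  -- archimedean
  have hMf : _root_.mahlerMeasure f = ‖a‖ * (s.map fun z => max ‖z‖ 1).prod := by
    rw [_root_.mahlerMeasure, ha, Complex.norm_intCast]
  have hMg : _root_.mahlerMeasure g = ‖a / k‖ * (s.map fun z =>
      max ‖(q : ℂ) * z + p‖ ‖((p : ℂ) + q) * z - q‖).prod := by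
    rw [aux_M_eq, hgmap, mahlerMeasure_mul, mahlerMeasure_const,
      prod_mahlerMeasure_eq_mahlerMeasure_prod, Multiset.map_map]
    congr 2
    refine Multiset.map_congr rfl fun z _ => ?_
    simp only [Function.comp]
    have n1 : ‖(q : ℂ) * z + p‖ = ‖(p : ℂ) + q * z‖ := by rw [add_comm]
    have n2 : ‖((p : ℂ) + q) * z - q‖ = ‖(q : ℂ) - (p + q) * z‖ := norm_sub_rev _ _
    rw [n1, n2]
    by_cases h0 : (q : ℂ) - (p + q) * z = 0
    · rw [h0, C_0, zero_mul, zero_add, mahlerMeasure_const, norm_zero, max_eq_left (norm_nonneg _)]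
    · rw [mahlerMeasure_C_mul_X_add_C h0, max_comm]
  set K := max |(p : ℝ) + 2 * q| |(p : ℝ) - q| / 3 with hK
  have hK0 : 0 ≤ K := by rw [hK]; positivity
  have harch := (aux_prod_le_real s (fun z => K * ‖z ^ 2 - z + 1‖)
    (fun z => max ‖z‖ 1 * max ‖(q : ℂ) * z + p‖ ‖((p : ℂ) + q) * z - q‖)
    (fun z => by positivity) (fun z => by simpa using aux_cpx p q z)).2
  rw [Multiset.prod_map_mul, Multiset.prod_map_mul, Multiset.map_const', Multiset.prod_replicate,
    hcard] at harch
  have hNn : ‖(N : ℂ) / k‖ = ‖a‖ * ‖a / k‖ * (s.map fun z => ‖z ^ 2 - z + 1‖).prod := by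
    have e : (N : ℂ) / k = a * (a / k) * (s.map fun z => z ^ 2 - z + 1).prod := by
      rw [hN2]; ring
    rw [e, norm_mul, norm_mul]
    congr 1
    have := map_multiset_prod (normHom : ℂ →*₀ ℝ) (s.map fun z => z ^ 2 - z + 1)
    rw [Multiset.map_map] at this
    exact this
  rw [hMf, hMg]
  calc K ^ (minpoly ℚ α).natDegree ≤ K ^ (minpoly ℚ α).natDegree * ‖(N : ℂ) / k‖ :=
        le_mul_of_one_le_right (by positivity) hnorm
    _ = (‖a‖ * ‖a / k‖) * (K ^ (minpoly ℚ α).natDegree * (s.map fun z => ‖z ^ 2 - z + 1‖).prod) := by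
        rw [hNn]; ring
    _ ≤ (‖a‖ * ‖a / k‖) * _ := mul_le_mul_of_nonneg_left harch (by positivity)
    _ = _ := by ring

/-- Row 7 of Table 1: for `σ(z) = (qz + p)/((p + q)z - q)` (an involution interchanging
`(1 + i√3)/2` and `(1 - i√3)/2`) with `p, q` coprime, `q > 0`, `p/q ≠ -1/2`: for every
algebraic `α ∉ {(1 + i√3)/2, (1 - i√3)/2}` one has
`h(α) + h(σ(α)) ≥ log max(|p + 2q|/3, |p - q|/3)`, with equality at `α = -1`
when `3 ∣ p - q`. -/
theorem table1_row7 (p q : ℤ) (hpq : IsCoprime p q) (hq : 0 < q)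
    (hratio : (p : ℚ) / (q : ℚ) ≠ -(1 / 2)) :
    (∀ α : ℂ, IsAlgebraic ℚ α →
      α ≠ (1 + Real.sqrt 3 * Complex.I) / 2 → α ≠ (1 - Real.sqrt 3 * Complex.I) / 2 →
      height α + height (((q : ℂ) * α + (p : ℂ)) / (((p : ℂ) + (q : ℂ)) * α - (q : ℂ)))
        ≥ Real.log (max ((|p + 2 * q| : ℝ) / 3) ((|p - q| : ℝ) / 3))) ∧
    (3 ∣ p - q →
      height (-1 : ℂ) +
          height (((q : ℂ) * (-1) + (p : ℂ)) / (((p : ℂ) + (q : ℂ)) * (-1) - (q : ℂ)))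
        = Real.log (max ((|p + 2 * q| : ℝ) / 3) ((|p - q| : ℝ) / 3))) := by
  have hqr : (0 : ℝ) < q := by exact_mod_cast hq
  have hqc : (q : ℂ) ≠ 0 := by exact_mod_cast hq.ne'
  rw [max_div_div_right (by norm_num : (0 : ℝ) ≤ 3)]
  have hC : 0 < max |(p : ℝ) + 2 * q| |(p : ℝ) - q| / 3 := by
    have : 0 < max |(p : ℝ) + 2 * q| |(p : ℝ) - q| := by
      rw [lt_max_iff]
      by_contra! h
      have a1 := abs_nonpos_iff.1 h.1
      have a2 := abs_nonpos_iff.1 h.2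
      linarith
    positivity
  refine ⟨?_, ?_⟩
  · intro α hα h1 h2
    have hsq : ((Real.sqrt 3 : ℝ) : ℂ) ^ 2 = 3 := by
      rw [← Complex.ofReal_pow, Real.sq_sqrt (by norm_num)]; norm_num
    rw [ge_iff_le]
    by_cases hd : ((p : ℂ) + q) * α - q = 0
    · rw [hd, div_zero, aux_height_zero, add_zero]
      have hpq0 : p + q ≠ 0 := by
        intro h
        have : ((p : ℂ) + q) = 0 := by exact_mod_cast h
        rw [this, zero_mul, zero_sub, neg_eq_zero] at hd
        exact hqc hd
      have hpqc : ((p + q : ℤ) : ℂ) ≠ 0 := by exact_mod_cast hpq0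
      have hαe : α = (q : ℂ) / ((p + q : ℤ) : ℂ) := by
        rw [eq_div_iff hpqc]; push_cast; linear_combination hd
      have hcop : IsCoprime q (p + q) := by
        have := hpq.symm.add_mul_left_right 1
        simpa using this
      rw [hαe, aux_height_rat q (p + q) hcop hpq0]
      apply Real.log_le_log hC
      push_cast
      have b1 := le_max_left |(q : ℝ)| |(p : ℝ) + q|
      have b2 := le_max_right |(q : ℝ)| |(p : ℝ) + q|
      set m := max |(q : ℝ)| |(p : ℝ) + q|
      obtain ⟨c1, c2⟩ := abs_le.1 b1
      obtain ⟨c3, c4⟩ := abs_le.1 b2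
      rw [div_le_iff₀ (by norm_num : (0 : ℝ) < 3)]
      refine max_le (abs_le.2 ⟨by linarith, by linarith⟩) (abs_le.2 ⟨by linarith, by linarith⟩)
    · set β := ((q : ℂ) * α + p) / (((p : ℂ) + q) * α - q) with hβ
      have hrel : ((q : ℂ) - (p + q) * α) * β + (p + q * α) = 0 := by
        have : β * (((p : ℂ) + q) * α - q) = q * α + p := div_mul_cancel₀ _ hd
        linear_combination -this
      obtain ⟨hM, hdeg⟩ := aux_main p q hpq hq.ne' α β _ _ (by ring) (by
        have := Complex.I_sq
        linear_combination (-(Complex.I ^ 2) / 4) * hsq - 3 / 4 * this) hα h1 h2 hrel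
      have hn : 0 < (minpoly ℚ α).natDegree := minpoly.natDegree_pos hα.isIntegral
      have hpos : ∀ γ : ℂ, 0 < _root_.mahlerMeasure (intMinpoly γ) := by
        intro γ
        rw [aux_M_eq]
        exact mahlerMeasure_pos_of_ne_zero
          ((Polynomial.map_ne_zero_iff (RingHom.injective_int _)).2 (aux_ne_zero γ))
      rw [height, height, hdeg, ← add_div, ← Real.log_mul (hpos α).ne' (hpos β).ne',
        le_div_iff₀ (by exact_mod_cast hn), mul_comm, ← Real.log_pow]
      exact Real.log_le_log (by positivity) hM
  · rintro ⟨m, hm⟩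
    have hp : p = q + 3 * m := by linarith
    subst hp
    have hcop : IsCoprime m q := by
      have h1 : IsCoprime (3 * m) q := by
        have := hpq.add_mul_left_left (-1)
        have h2 : q + 3 * m + q * (-1) = 3 * m := by ring
        rwa [h2] at this
      exact h1.of_mul_left_right
    have hm1 : height (-1 : ℂ) = 0 := by
      have := aux_height_rat (-1) 1 isCoprime_one_right one_ne_zero
      simpa using this
    have hCe : max |((q + 3 * m : ℤ) : ℝ) + 2 * q| |((q + 3 * m : ℤ) : ℝ) - q| / 3 =
        max |(m : ℝ)| |((-(q + m) : ℤ) : ℝ)| := by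
      have a1 : ((q + 3 * m : ℤ) : ℝ) + 2 * q = 3 * (q + m) := by push_cast; ring
      have a2 : ((q + 3 * m : ℤ) : ℝ) - q = 3 * m := by push_cast; ring
      rw [a1, a2, abs_mul, abs_mul, ← mul_max_of_nonneg _ _ (abs_nonneg _), max_comm]
      push_cast
      rw [abs_neg, abs_of_pos (by norm_num : (0 : ℝ) < 3)]
      ring
    rw [hm1, zero_add, hCe]
    by_cases h0 : q + m = 0
    · have hmq : m = -q := by linarith
      subst hmq
      have hu : IsUnit q := hcop.isUnit_of_dvd' (by simp) dvd_rfl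
      have hq1 : q = 1 := by
        rcases Int.isUnit_iff.1 hu with h | h
        · exact h
        · omega
      subst hq1
      norm_num [aux_height_zero]
    · have hc2 : IsCoprime m (-(q + m)) := by
        have := hcop.add_mul_left_right 1
        rw [mul_one] at this
        exact this.neg_right
      rw [← aux_height_rat m (-(q + m)) hc2 (neg_ne_zero.2 h0)]
      congr 1
      have h0c : ((q : ℂ) + m) ≠ 0 := by exact_mod_cast h0
      have hd : (((q + 3 * m : ℤ) : ℂ) + q) * (-1) - q = 3 * (-(q + m)) := by push_cast; ring
      have hn : (q : ℂ) * (-1) + ((q + 3 * m : ℤ) : ℂ) = 3 * m := by push_cast; ring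
      rw [hd, hn, mul_div_mul_left _ _ (by norm_num)]
      push_cast; rfl
end

section
/- Let σ ∈ PGL₂(ℚ) be the involution σ(z) = z/(2z − 1). Then for every algebraic number α with α ∉ {0, 1}, h(α) + h(α/(2α − 1)) ≥ (1/2)·log 3, with equality for α = (1 + i√3)/2. -/
/- For a nonzero `f ∈ ℤ[X]`, the Mahler measure `M(f) = |a_n| ∏ max(|α_i|,1)`. -/
open Polynomial

theorem local_real (A B : ℝ) (hA : 0 ≤ A) (hB : 0 ≤ B) :
   27 * A^4*B^2 ≤ max A 1 ^3 * max A (2*A+2*B-1)^3 := by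
  have amgm : ∀ x y : ℝ, 0 ≤ x → 0 ≤ y → 27*x*y^2 ≤ (x+2*y)^3 := by
    intro x y hx hy
    nlinarith [mul_nonneg hx (sq_nonneg (x-y)), mul_nonneg hy (sq_nonneg (x-y))]
  have mono : ∀ x y : ℝ, 0 ≤ x → x ≤ y → x^3 ≤ y^3 := fun x y hx hy => pow_le_pow_left₀ hx hy 3
  rcases le_total A 1 with h1 | h1
  · rw [max_eq_right h1]
    rcases le_total A (2*A+2*B-1) with h2 | h2
    · rw [max_eq_right h2]
      rcases hA.eq_or_lt with rfl | hA'
      · have := mono 0 _ le_rfl h2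
        simpa using this
      set D := 2*A+2*B-1 with hD
      have hBD : 2 * A * B ≤ D - A^2 := by
        nlinarith [mul_nonneg (sub_nonneg.2 h1) (sub_nonneg.2 h2)]
      have := amgm (A^2) (A*B) (by positivity) (by positivity)
      have h3 := mono (A^2+2*(A*B)) D (by positivity) (by linarith)
      nlinarith
    · rw [max_eq_left h2]
      have h := amgm A B hA hB
      have h3 := mono (A+2*B) 1 (by positivity) (by linarith)
      have : 27*A*B^2 ≤ 1 := by linarith
      nlinarith [pow_nonneg hA 3]
  · rw [max_eq_left h1]
    have h := amgm A B hA hB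
    have h3 := mono (A+2*B) (max A (2*A+2*B-1)) (by positivity) ((by linarith : _ ≤ 2*A+2*B-1).trans (le_max_right _ _))
    have := mul_le_mul_of_nonneg_left (h.trans h3) (pow_nonneg hA 3)
    nlinarith

theorem local_ineq (z : ℂ) :
   27 * ‖z‖^8*‖1 - z‖^4 ≤ (max ‖z‖ 1 * max ‖z‖ ‖2*z-1‖)^6 := by
  have h := local_real (‖z‖^2) (‖1-z‖^2) (by positivity) (by positivity)
  have hD : 2*‖z‖^2+2*‖1-z‖^2-1 = ‖2*z-1‖^2 := by
    simp only [← Complex.normSq_eq_norm_sq, Complex.normSq_apply]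
    simp
    ring
  rw [hD] at h
  have hm : ∀ a b : ℝ, 0 ≤ a → 0 ≤ b → max (a^2) (b^2) = (max a b)^2 := by
    intro a b ha hb
    rcases le_total a b with h | h
    · rw [max_eq_right h, max_eq_right (by gcongr)]
    · rw [max_eq_left h, max_eq_left (by gcongr)]
  have e1 := hm ‖z‖ 1 (norm_nonneg _) zero_le_one
  have e2 := hm ‖z‖ ‖2*z-1‖ (norm_nonneg _) (norm_nonneg _)
  rw [one_pow] at e1
  rw [e1, e2] at h
  calc _ = 27 * (‖z‖ ^ 2) ^ 4 * (‖1 - z‖ ^ 2) ^ 2 := by ring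
    _ ≤ _ := h
    _ = _ := by ring

theorem intMinpoly_prim (α : ℂ) : (intMinpoly α).IsPrimitive := isPrimitive_primPart _

theorem intMinpoly_map {α : ℂ} (hα : IsIntegral ℚ α) :
    ∃ q : ℚ, q ≠ 0 ∧ (intMinpoly α).map (Int.castRingHom ℚ) = C q * minpoly ℚ α := by
  obtain ⟨b, hb, h⟩ := IsLocalization.integerNormalization_spec (nonZeroDivisors ℤ) (minpoly ℚ α)
  set p := IsLocalization.integerNormalization (nonZeroDivisors ℤ) (minpoly ℚ α) with hp
  have hb0 : b ≠ 0 := nonZeroDivisors.ne_zero hb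
  have hp0 : p ≠ 0 := by
    intro h0
    rw [h0, Polynomial.map_zero] at h
    exact (smul_ne_zero hb0 (minpoly.ne_zero hα)) h.symm
  have hc0 : (p.content : ℚ) ≠ 0 := by
    exact_mod_cast mt content_eq_zero_iff.1 hp0
  have h1 : p.map (Int.castRingHom ℚ) = C (b : ℚ) * minpoly ℚ α := by
    have : (algebraMap ℤ ℚ) = Int.castRingHom ℚ := rfl
    rw [← this, h, ← Int.cast_smul_eq_zsmul ℚ, smul_eq_C_mul]
  have h2 : p.map (Int.castRingHom ℚ) = C (p.content : ℚ) * (intMinpoly α).map (Int.castRingHom ℚ) := by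
    conv_lhs => rw [p.eq_C_content_mul_primPart]
    simp [intMinpoly, ← hp]
  refine ⟨(p.content : ℚ)⁻¹ * b, mul_ne_zero (inv_ne_zero hc0) (by exact_mod_cast hb0), ?_⟩
  rw [C_mul, mul_assoc, ← h1, h2, ← mul_assoc, ← C_mul, inv_mul_cancel₀ hc0, C_1, one_mul]

theorem intMinpoly_mapC {α : ℂ} (hα : IsIntegral ℚ α) :
    ∃ q : ℂ, q ≠ 0 ∧ (intMinpoly α).map (Int.castRingHom ℂ) =
      C q * (minpoly ℚ α).map (algebraMap ℚ ℂ) := by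
  obtain ⟨q, hq, h⟩ := intMinpoly_map hα
  refine ⟨algebraMap ℚ ℂ q, by simpa using hq, ?_⟩
  have := congrArg (Polynomial.map (algebraMap ℚ ℂ)) h
  rw [Polynomial.map_map, Polynomial.map_mul, map_C] at this
  rw [← this]
  congr 1

theorem intMinpoly_roots {α : ℂ} (hα : IsIntegral ℚ α) :
    ((intMinpoly α).map (Int.castRingHom ℂ)).roots = (minpoly ℚ α).aroots ℂ := by
  obtain ⟨q, hq, h⟩ := intMinpoly_mapC hα
  rw [h, roots_C_mul _ hq]

theorem intMinpoly_dvd {α : ℂ} (hα : IsIntegral ℚ α) (p : ℤ[X]) (hp : aeval α p = 0) :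
    intMinpoly α ∣ p := by
  obtain ⟨q, hq, h⟩ := intMinpoly_map hα
  rw [IsPrimitive.Int.dvd_iff_map_cast_dvd_map_cast _ _ (intMinpoly_prim α), h]
  rw [(isUnit_C.2 hq.isUnit).mul_left_dvd]
  apply minpoly.dvd
  rw [← hp]
  exact aeval_map_algebraMap ℚ α p

theorem intMinpoly_aeval {α : ℂ} (hα : IsIntegral ℚ α) : aeval α (intMinpoly α) = 0 := by
  obtain ⟨q, hq, h⟩ := intMinpoly_map hα
  have : aeval α ((intMinpoly α).map (Int.castRingHom ℚ)) = aeval α (intMinpoly α) :=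
    aeval_map_algebraMap ℚ α _
  rw [← this, h]
  simp

theorem intMinpoly_natDegree {α : ℂ} (hα : IsIntegral ℚ α) :
    (intMinpoly α).natDegree = (minpoly ℚ α).natDegree := by
  obtain ⟨q, hq, h⟩ := intMinpoly_map hα
  have := congrArg natDegree h
  rwa [natDegree_C_mul hq, natDegree_map_eq_of_injective (RingHom.injective_int _)] at this

theorem card_aroots (α : ℂ) :
    Multiset.card ((minpoly ℚ α).aroots ℂ) = (minpoly ℚ α).natDegree := by
  rw [IsAlgClosed.card_aroots_eq_natDegree]

theorem mahler_eq {α : ℂ} (hα : IsIntegral ℚ α) :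
    mahlerMeasure (intMinpoly α) = |((intMinpoly α).leadingCoeff : ℝ)| *
      (((minpoly ℚ α).aroots ℂ).map (fun z => max ‖z‖ 1)).prod := by
  rw [_root_.mahlerMeasure, intMinpoly_roots hα]

theorem abs_eval {α : ℂ} (hα : IsIntegral ℚ α) (x : ℤ) :
    |((eval x (intMinpoly α) : ℤ) : ℝ)| = |((intMinpoly α).leadingCoeff : ℝ)| *
      (((minpoly ℚ α).aroots ℂ).map (fun z => ‖(x : ℂ) - z‖)).prod := by
  have h := (IsAlgClosed.splits ((intMinpoly α).map (Int.castRingHom ℂ))).eval_eq_prod_roots (x : ℂ)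
  rw [intMinpoly_roots hα, leadingCoeff_map_of_injective (RingHom.injective_int _)] at h
  have h' := congrArg norm h
  rw [norm_mul, ← eq_intCast (Int.castRingHom ℂ) x, eval_map_apply] at h'
  simp only [eq_intCast, Complex.norm_intCast] at h'
  rw [h']
  congr 1
  have hn := map_multiset_prod (normHom : ℂ →*₀ ℝ) (((minpoly ℚ α).aroots ℂ).map (fun z => (x : ℂ) - z))
  rw [Multiset.map_map] at hn
  exact hn

theorem prod_one_le (m : Multiset ℂ) : 1 ≤ (m.map (fun z => max ‖z‖ 1)).prod := by
  induction m using Multiset.induction with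
  | empty => simp
  | cons a s ih =>
    rw [Multiset.map_cons, Multiset.prod_cons]
    exact one_le_mul_of_one_le_of_one_le (le_max_right _ _) ih

theorem one_le_lead (f : ℤ[X]) (hf : f ≠ 0) : 1 ≤ |(f.leadingCoeff : ℝ)| := by
  exact_mod_cast Int.one_le_abs (leadingCoeff_ne_zero.2 hf)

theorem lead_le_mahler (f : ℤ[X]) : |(f.leadingCoeff : ℝ)| ≤ mahlerMeasure f :=
  le_mul_of_one_le_right (abs_nonneg _) (prod_one_le _)

theorem one_le_mahler (α : ℂ) : 1 ≤ mahlerMeasure (intMinpoly α) :=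
  (one_le_lead _ (intMinpoly_prim α).ne_zero).trans (lead_le_mahler _)

theorem height_nonneg (α : ℂ) : 0 ≤ height α :=
  div_nonneg (Real.log_nonneg (one_le_mahler α)) (Nat.cast_nonneg _)

theorem conj_of_root {α z : ℂ} (hα : IsIntegral ℚ α) (hz : aeval z (minpoly ℚ α) = 0) :
    minpoly ℚ α = minpoly ℚ z :=
  minpoly.eq_of_irreducible_of_monic (minpoly.irreducible hα) hz (minpoly.monic hα)

theorem conj_rat {α : ℂ} (q : ℚ) (h : minpoly ℚ α = minpoly ℚ (algebraMap ℚ ℂ q)) :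
    α = algebraMap ℚ ℂ q := by
  have h1 := minpoly.aeval ℚ α
  rw [h, minpoly.eq_X_sub_C] at h1
  simpa [sub_eq_zero] using h1

theorem conj_sigma {α z : ℂ} (hα : IsIntegral ℚ α) (h : minpoly ℚ α = minpoly ℚ z) :
    minpoly ℚ (α / (2 * α - 1)) = minpoly ℚ (z / (2 * z - 1)) := by
  have hz : z ∈ (minpoly ℚ α).aroots ℂ := by
    rw [mem_aroots]
    exact ⟨minpoly.ne_zero hα, by rw [h]; exact minpoly.aeval _ _⟩
  let φ := (IntermediateField.algHomAdjoinIntegralEquiv ℚ hα).symm ⟨z, hz⟩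
  have hφ : φ (IntermediateField.AdjoinSimple.gen ℚ α) = z :=
    IntermediateField.algHomAdjoinIntegralEquiv_symm_apply_gen ℚ hα ⟨z, hz⟩
  set g := IntermediateField.AdjoinSimple.gen ℚ α with hg
  have e1 := minpoly.algHom_eq φ φ.injective (g / (2 * g - 1))
  have e2 := minpoly.algHom_eq (IntermediateField.val _) Subtype.val_injective (g / (2 * g - 1))
  have e3 : φ (g / (2 * g - 1)) = z / (2 * z - 1) := by
    rw [map_div₀, map_sub, map_mul, hφ, map_one, map_ofNat]
  have e4 : (IntermediateField.val _) (g / (2 * g - 1)) = α / (2 * α - 1) := by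
    rw [map_div₀, map_sub, map_mul, map_one, map_ofNat]
    simp [hg]
  rw [← e3, ← e4, e1, e2]

theorem sigma_sigma {z : ℂ} (hz : 2 * z - 1 ≠ 0) :
    (z / (2 * z - 1)) / (2 * (z / (2 * z - 1)) - 1) = z := by
  have : 2 * (z / (2 * z - 1)) - 1 = 1 / (2 * z - 1) := by
    field_simp
    ring
  rw [this, div_div_div_cancel_right₀ hz, div_one]

theorem sigma_ne {z : ℂ} (hz : 2 * z - 1 ≠ 0) : 2 * (z / (2 * z - 1)) - 1 ≠ 0 := by
  have : 2 * (z / (2 * z - 1)) - 1 = 1 / (2 * z - 1) := by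
    field_simp
    ring
  rw [this]
  exact one_div_ne_zero hz

theorem mem_roots_iff {α z : ℂ} (hα : IsIntegral ℚ α) :
    z ∈ (minpoly ℚ α).aroots ℂ ↔ minpoly ℚ α = minpoly ℚ z := by
  rw [mem_aroots]
  refine ⟨fun h => conj_of_root hα h.2, fun h => ⟨minpoly.ne_zero hα, ?_⟩⟩
  rw [h]
  exact minpoly.aeval _ _

theorem conj_half {α z : ℂ} (hα : 2 * α - 1 ≠ 0) (h : minpoly ℚ α = minpoly ℚ z) :
    2 * z - 1 ≠ 0 := by
  intro hz
  have hz' : z = algebraMap ℚ ℂ (1 / 2) := by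
    have : (2 : ℂ) * z = 1 := sub_eq_zero.1 hz
    simp only [one_div, map_inv₀, map_ofNat]
    exact eq_inv_of_mul_eq_one_right this
  rw [hz'] at h
  have := conj_rat _ h
  rw [← hz'] at this
  rw [this] at hα
  exact hα hz

theorem roots_sigma {α : ℂ} (hα : IsIntegral ℚ α) (hα2 : 2 * α - 1 ≠ 0)
    (hβ : IsIntegral ℚ (α / (2 * α - 1))) :
    (minpoly ℚ (α / (2 * α - 1))).aroots ℂ =
      ((minpoly ℚ α).aroots ℂ).map (fun z => z / (2 * z - 1)) := by
  have nd : ∀ γ : ℂ, IsIntegral ℚ γ → ((minpoly ℚ γ).aroots ℂ).Nodup := fun γ hγ =>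
    nodup_roots (minpoly.irreducible hγ).separable.map
  rw [Multiset.Nodup.ext (nd _ hβ)]
  · intro w
    rw [mem_roots_iff hβ, Multiset.mem_map]
    constructor
    · intro h
      refine ⟨w / (2 * w - 1), ?_, sigma_sigma (conj_half (sigma_ne hα2) h)⟩
      rw [mem_roots_iff hα, ← conj_sigma hβ h, sigma_sigma hα2]
    · rintro ⟨z, hz, rfl⟩
      exact conj_sigma hα ((mem_roots_iff hα).1 hz)
  · refine Multiset.Nodup.map_on ?_ (nd _ hα)
    intro x hx y hy hxy
    have hx := conj_half hα2 ((mem_roots_iff hα).1 hx)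
    have hy := conj_half hα2 ((mem_roots_iff hα).1 hy)
    rw [← sigma_sigma hx, ← sigma_sigma hy, hxy]

theorem eval_ne {α : ℂ} (hα : IsIntegral ℚ α) (x : ℤ) (hx : α ≠ x) :
    eval x (intMinpoly α) ≠ 0 := by
  intro h
  obtain ⟨q, hq, he⟩ := intMinpoly_map hα
  have h1 : eval (x : ℚ) ((intMinpoly α).map (Int.castRingHom ℚ)) = 0 := by
    rw [← eq_intCast (Int.castRingHom ℚ) x, eval_map_apply, h, map_zero]
  rw [he, eval_mul, eval_C, mul_eq_zero] at h1
  have h2 := h1.resolve_left hq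
  have h3 : aeval (algebraMap ℚ ℂ x) (minpoly ℚ α) = 0 := by
    rw [aeval_algebraMap_apply, coe_aeval_eq_eval, h2, map_zero]
  apply hx
  rw [conj_rat _ (conj_of_root hα h3)]
  simp

theorem eval_zero_dvd {α : ℂ} (hα : IsIntegral ℚ α) (hα2 : 2 * α - 1 ≠ 0)
    (hβ : IsIntegral ℚ (α / (2 * α - 1))) :
    eval 0 (intMinpoly α) ∣ eval 0 (intMinpoly (α / (2 * α - 1))) := by
  set g := intMinpoly (α / (2 * α - 1)) with hg
  set N := g.natDegree with hN
  let t : ℤ[X] := ∑ k ∈ Finset.range (N + 1), C (g.coeff k) * X ^ k * (2 * X - 1) ^ (N - k)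
  have h1 : aeval α t = (2 * α - 1) ^ N * aeval (α / (2 * α - 1)) g := by
    rw [aeval_eq_sum_range (p := g), ← hN, Finset.mul_sum, map_sum]
    refine Finset.sum_congr rfl fun k hk => ?_
    have hk : k ≤ N := Nat.lt_succ_iff.1 (Finset.mem_range.1 hk)
    simp only [map_mul, map_pow, aeval_X, map_sub, map_one, aeval_C, map_ofNat]
    rw [div_pow, ← pow_sub_mul_pow (2 * α - 1) hk, zsmul_eq_mul]
    have : (2 * α - 1) ^ k ≠ 0 := pow_ne_zero _ hα2
    field_simp
    simp [mul_comm]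
  have h2 : aeval α t = 0 := by rw [h1, intMinpoly_aeval hβ, mul_zero]
  have h3 := eval_dvd (x := 0) (intMinpoly_dvd hα t h2)
  have h4 : eval 0 t = eval 0 g * (-1) ^ N := by
    simp only [t, eval_finsetSum, eval_mul, eval_C, eval_pow, eval_X]
    rw [Finset.sum_eq_single 0]
    · simp [coeff_zero_eq_eval_zero]
    · intro b _ hb
      simp [hb]
    · simp
  rw [h4] at h3
  exact (IsUnit.dvd_mul_right (isUnit_one.neg.pow N)).1 h3

theorem prod_ineq (S : Multiset ℂ) :
    27 ^ (Multiset.card S) * (S.map (fun z => ‖z‖)).prod ^ 8 * (S.map (fun z => ‖1 - z‖)).prod ^ 4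
      ≤ ((S.map (fun z => max ‖z‖ 1)).prod * (S.map (fun z => max ‖z‖ ‖2 * z - 1‖)).prod) ^ 6 := by
  induction S using Multiset.induction with
  | empty => simp
  | cons a s ih =>
    simp only [Multiset.map_cons, Multiset.prod_cons, Multiset.card_cons]
    have h := local_ineq a
    have h0 : 0 ≤ 27 ^ (Multiset.card s) * (s.map (fun z => ‖z‖)).prod ^ 8 *
        (s.map (fun z => ‖1 - z‖)).prod ^ 4 := by
      have : ∀ x : ℝ, 0 ≤ x ^ 8 := fun x => by positivity
      positivity
    have := mul_le_mul h ih h0 (by positivity)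
    calc _ = _ := by ring
      _ ≤ _ := this
      _ = _ := by ring

theorem prod_sigma (S : Multiset ℂ) (hS : ∀ z ∈ S, 2 * z - 1 ≠ 0) :
    (S.map (fun z => max ‖z / (2 * z - 1)‖ 1)).prod * (S.map (fun z => ‖z‖)).prod =
    (S.map (fun z => max ‖z‖ ‖2 * z - 1‖)).prod * (S.map (fun z => ‖z / (2 * z - 1)‖)).prod := by
  rw [← Multiset.prod_map_mul, ← Multiset.prod_map_mul]
  congr 1
  refine Multiset.map_congr rfl fun z hz => ?_
  have h : 0 < ‖2 * z - 1‖ := norm_pos_iff.2 (hS z hz)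
  rw [norm_div]
  have : max ‖z‖ ‖2 * z - 1‖ = max (‖z‖ / ‖2 * z - 1‖) 1 * ‖2 * z - 1‖ := by
    rw [max_mul_of_nonneg _ _ h.le, div_mul_cancel₀ _ h.ne', one_mul]
  rw [this]
  field_simp

theorem main_ineq {α : ℂ} (hα : IsIntegral ℚ α) (hα2 : 2 * α - 1 ≠ 0)
    (hβ : IsIntegral ℚ (α / (2 * α - 1))) (h0 : α ≠ 0) (h1 : α ≠ 1) :
    27 ^ (minpoly ℚ α).natDegree ≤ (mahlerMeasure (intMinpoly α) *
      mahlerMeasure (intMinpoly (α / (2 * α - 1)))) ^ 6 := by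
  have hd := eval_zero_dvd hα hα2 hβ
  have hr := roots_sigma hα hα2 hβ
  have f0 := abs_eval hα 0
  have f1 := abs_eval hα 1
  have g0 := abs_eval hβ 0
  have mf := mahler_eq hα
  have mg := mahler_eq hβ
  have nf0 := eval_ne hα 0 (by simpa using h0)
  have nf1 := eval_ne hα 1 (by simpa using h1)
  have ng0 := eval_ne hβ 0 (by simpa using div_ne_zero h0 hα2)
  have hS : ∀ z ∈ (minpoly ℚ α).aroots ℂ, 2 * z - 1 ≠ 0 := fun z hz =>
    conj_half hα2 ((mem_roots_iff hα).1 hz)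
  have hcard := card_aroots α
  have hle : |((eval 0 (intMinpoly α) : ℤ) : ℝ)| ≤
      |((eval 0 (intMinpoly (α / (2 * α - 1))) : ℤ) : ℝ)| := by
    have := Int.le_of_dvd (abs_pos.2 ng0) ((abs_dvd_abs _ _).2 hd)
    exact_mod_cast this
  have one0 : 1 ≤ |((eval 0 (intMinpoly α) : ℤ) : ℝ)| := by
    exact_mod_cast Int.one_le_abs nf0
  have one1 : 1 ≤ |((eval 1 (intMinpoly α) : ℤ) : ℝ)| := by
    exact_mod_cast Int.one_le_abs nf1
  rw [hr, Multiset.map_map] at g0 mg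
  simp only [Function.comp_def, Int.cast_zero, Int.cast_one, zero_sub, norm_neg] at f0 f1 g0 mg
  have hps := prod_sigma _ hS
  have hpi := prod_ineq ((minpoly ℚ α).aroots ℂ)
  have pm : ∀ F : ℂ → ℝ, (∀ z, 0 ≤ F z) → 0 ≤ (((minpoly ℚ α).aroots ℂ).map F).prod := by
    intro F hF
    refine Multiset.prod_nonneg fun x hx => ?_
    obtain ⟨z, -, rfl⟩ := Multiset.mem_map.1 hx
    exact hF z
  have pA := pm (fun z => ‖z‖) (fun z => norm_nonneg z)
  have pM := pm (fun z => max ‖z‖ 1) (fun z => by positivity)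
  have pW := pm (fun z => max ‖z‖ ‖2 * z - 1‖) (fun z => by positivity)
  rw [hcard] at hpi
  rw [mf, mg]
  rw [f0] at hle one0
  rw [g0] at hle
  rw [f1] at one1
  generalize (minpoly ℚ α).natDegree = n at *
  generalize (((minpoly ℚ α).aroots ℂ).map (fun z => ‖z‖)).prod = A at *
  generalize (((minpoly ℚ α).aroots ℂ).map (fun z => ‖1 - z‖)).prod = B at *
  generalize (((minpoly ℚ α).aroots ℂ).map (fun z => max ‖z‖ 1)).prod = M at *
  generalize (((minpoly ℚ α).aroots ℂ).map (fun z => max ‖z‖ ‖2 * z - 1‖)).prod = W at *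
  generalize (((minpoly ℚ α).aroots ℂ).map (fun z => ‖z / (2 * z - 1)‖)).prod = Q at *
  generalize (((minpoly ℚ α).aroots ℂ).map (fun z => max ‖z / (2 * z - 1)‖ 1)).prod = V at *
  have hap : 0 ≤ |((intMinpoly α).leadingCoeff : ℝ)| := abs_nonneg _
  generalize |((intMinpoly α).leadingCoeff : ℝ)| = a at *
  generalize |((intMinpoly (α / (2 * α - 1))).leadingCoeff : ℝ)| = b at *
  have hA : 0 < A := by
    rcases pA.eq_or_lt with h | h
    · rw [← h] at one0
      norm_num at one0
    · exact h
  have key : a * W ≤ b * V := by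
    refine le_of_mul_le_mul_right ?_ hA
    calc a * W * A = (a * A) * W := by ring
      _ ≤ (b * Q) * W := by gcongr
      _ = b * (W * Q) := by ring
      _ = b * V * A := by rw [← hps]; ring
  calc (27 : ℝ) ^ n = 27 ^ n * 1 ^ 8 * 1 ^ 4 := by ring
    _ ≤ 27 ^ n * (a * A) ^ 8 * (a * B) ^ 4 := by gcongr
    _ = a ^ 12 * (27 ^ n * A ^ 8 * B ^ 4) := by ring
    _ ≤ a ^ 12 * (M * W) ^ 6 := by gcongr
    _ = (a * M * (a * W)) ^ 6 := by ring
    _ ≤ (a * M * (b * V)) ^ 6 := by gcongr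

theorem deg_sigma {α : ℂ} (hα : IsIntegral ℚ α) (hα2 : 2 * α - 1 ≠ 0)
    (hβ : IsIntegral ℚ (α / (2 * α - 1))) :
    (minpoly ℚ (α / (2 * α - 1))).natDegree = (minpoly ℚ α).natDegree := by
  rw [← card_aroots, ← card_aroots, roots_sigma hα hα2 hβ, Multiset.card_map]

theorem height_half : Real.log 2 ≤ height (1 / 2) := by
  have e : (1 / 2 : ℂ) = algebraMap ℚ ℂ (1 / 2) := by simp
  have hI : IsIntegral ℚ (1 / 2 : ℂ) := e ▸ isIntegral_algebraMap
  have hm : minpoly ℚ (1 / 2 : ℂ) = X - C (1 / 2 : ℚ) := by rw [e, minpoly.eq_X_sub_C]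
  have hd : (minpoly ℚ (1 / 2 : ℂ)).natDegree = 1 := by rw [hm, natDegree_X_sub_C]
  have hd' := intMinpoly_natDegree hI
  rw [hd] at hd'
  have h0 := intMinpoly_aeval hI
  have hl : (intMinpoly (1 / 2)).leadingCoeff ≠ 0 :=
    leadingCoeff_ne_zero.2 (intMinpoly_prim _).ne_zero
  rw [aeval_eq_sum_range, hd'] at h0
  simp only [Finset.sum_range_succ, Finset.range_zero, Finset.sum_empty, zsmul_eq_mul] at h0
  have h2 : (intMinpoly (1 / 2)).coeff 1 = -2 * (intMinpoly (1 / 2)).coeff 0 := by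
    have : ((intMinpoly (1 / 2)).coeff 1 : ℂ) = -2 * (intMinpoly (1 / 2)).coeff 0 := by
      linear_combination 2 * h0
    exact_mod_cast this
  rw [leadingCoeff, hd'] at hl
  have h3 : 2 ≤ |(intMinpoly (1 / 2)).coeff 1| := by
    rw [h2] at hl ⊢
    rw [abs_mul]
    have := Int.one_le_abs (right_ne_zero_of_mul hl)
    norm_num
    linarith
  have h4 := lead_le_mahler (intMinpoly (1 / 2))
  rw [leadingCoeff, hd'] at h4
  have h5 : (2 : ℝ) ≤ |((intMinpoly (1 / 2)).coeff 1 : ℝ)| := by exact_mod_cast h3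
  rw [height, hd, Nat.cast_one, div_one]
  exact Real.log_le_log (by norm_num) (h5.trans h4)

theorem height_quad {α : ℂ} (p : ℤ[X]) (hp : p.natDegree = 2) (hpp : p.IsPrimitive)
    (h0 : aeval α p = 0) (him : α.im ≠ 0)
    (hroots : ∀ z : ℂ, aeval z p = 0 → ‖z‖ ≤ 1) :
    height α = Real.log |(p.leadingCoeff : ℝ)| / 2 := by
  have hp0 := hpp.ne_zero
  have hI : IsIntegral ℚ α := by
    rw [← isAlgebraic_iff_isIntegral]
    refine ⟨p.map (Int.castRingHom ℚ), ?_, ?_⟩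
    · rwa [Ne, Polynomial.map_eq_zero_iff (RingHom.injective_int _)]
    · rw [← h0]
      exact aeval_map_algebraMap ℚ α p
  have hge : 2 ≤ (minpoly ℚ α).natDegree := by
    rw [minpoly.two_le_natDegree_iff hI]
    rintro ⟨q, rfl⟩
    simp at him
  obtain ⟨k, hk⟩ := intMinpoly_dvd hI p h0
  have hf0 := (intMinpoly_prim α).ne_zero
  have hk0 : k ≠ 0 := by
    rintro rfl
    exact hp0 (by simpa using hk)
  have hdeg := congrArg natDegree hk
  rw [natDegree_mul hf0 hk0, hp, intMinpoly_natDegree hI] at hdeg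
  have hd2 : (minpoly ℚ α).natDegree = 2 := by omega
  have hkd : k.natDegree = 0 := by omega
  obtain ⟨c, rfl⟩ : ∃ c, k = C c := ⟨_, eq_C_of_natDegree_eq_zero hkd⟩
  have hc : IsUnit c := hpp c ⟨intMinpoly α, by rw [hk, mul_comm]⟩
  have hlead : |(p.leadingCoeff : ℝ)| = |((intMinpoly α).leadingCoeff : ℝ)| := by
    rw [hk, leadingCoeff_mul, leadingCoeff_C]
    push_cast
    rw [abs_mul]
    have : |c| = 1 := Int.isUnit_iff_abs_eq.1 hc
    have : |(c : ℝ)| = 1 := by exact_mod_cast this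
    rw [this, mul_one]
  rw [height, hd2, hlead, mahler_eq hI]
  have : ((minpoly ℚ α).aroots ℂ).map (fun z => max ‖z‖ 1) =
      ((minpoly ℚ α).aroots ℂ).map (fun _ => (1 : ℝ)) := by
    refine Multiset.map_congr rfl fun z hz => ?_
    rw [← intMinpoly_roots hI] at hz
    have hz0 := (mem_roots'.1 hz).2
    apply max_eq_right
    apply hroots
    rw [hk, map_mul]
    have : aeval z (intMinpoly α) = 0 := by
      rw [IsRoot, eval_map] at hz0
      exact hz0
    rw [this, zero_mul]
  rw [this]
  simp

theorem table2_row2 :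
    (∀ α : ℂ, IsAlgebraic ℚ α → α ≠ 0 → α ≠ 1 →
      height α + height (α / (2 * α - 1)) ≥ (1 / 2) * Real.log 3) ∧
    height ((1 + Real.sqrt 3 * Complex.I) / 2) +
        height (((1 + Real.sqrt 3 * Complex.I) / 2) /
          (2 * ((1 + Real.sqrt 3 * Complex.I) / 2) - 1))
      = (1 / 2) * Real.log 3 := by
  constructor
  · intro α halg h0 h1
    have hα := halg.isIntegral
    by_cases hα2 : 2 * α - 1 = 0
    · have e : α = 1 / 2 := by linear_combination hα2 / 2
      have h2 := height_nonneg (α / (2 * α - 1))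
      have h3 := height_half
      rw [← e] at h3
      have h4 : Real.log 3 ≤ Real.log (2 ^ 2) := Real.log_le_log (by norm_num) (by norm_num)
      rw [Real.log_pow] at h4
      push_cast at h4
      linarith
    · have hβ : IsIntegral ℚ (α / (2 * α - 1)) :=
by
        rw [div_eq_mul_inv]
        have h2 : IsAlgebraic ℚ (2 : ℂ) := by
          simpa using isAlgebraic_algebraMap (R := ℚ) (A := ℂ) (2 : ℚ)
        exact (halg.mul ((h2.mul halg).sub isAlgebraic_one).inv).isIntegral
      have hm := main_ineq hα hα2 hβ h0 h1
      have p1 := one_le_mahler α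
      have p2 := one_le_mahler (α / (2 * α - 1))
      have hl := Real.log_le_log (by positivity) hm
      rw [Real.log_pow, Real.log_pow, Real.log_mul (by positivity) (by positivity),
        show (27 : ℝ) = 3 ^ 3 by norm_num, Real.log_pow] at hl
      have hn : (0 : ℝ) < (minpoly ℚ α).natDegree := by exact_mod_cast minpoly.natDegree_pos hα
      rw [height, height, deg_sigma hα hα2 hβ, ← add_div, ge_iff_le, le_div_iff₀ hn]
      push_cast at hl
      linarith
  · set s : ℂ := ((Real.sqrt 3 : ℝ) : ℂ) with hs
    have hs2 : s ^ 2 = 3 := by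
      rw [hs, ← Complex.ofReal_pow, Real.sq_sqrt (by norm_num)]
      norm_num
    have hI2 : Complex.I ^ 2 = -1 := Complex.I_sq
    have hs0 : s ≠ 0 := by
      intro h
      rw [h] at hs2
      norm_num at hs2
    have e : ((1 + s * Complex.I) / 2) / (2 * ((1 + s * Complex.I) / 2) - 1)
        = (1 - s / 3 * Complex.I) / 2 := by
      have : (2 * ((1 + s * Complex.I) / 2) - 1) = s * Complex.I := by ring
      rw [this, div_eq_iff (mul_ne_zero hs0 Complex.I_ne_zero)]
      linear_combination (s ^ 2 / 6) * hI2 - (1 / 6) * hs2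
    have hr0 : Real.sqrt 3 ≠ 0 := by positivity
    have d1 : (X ^ 2 - X + 1 : ℤ[X]).natDegree = 2 := by compute_degree!
    have d2 : (3 * X ^ 2 - 3 * X + 1 : ℤ[X]).natDegree = 2 := by compute_degree!
    have l1 : (X ^ 2 - X + 1 : ℤ[X]).leadingCoeff = 1 := by
      rw [leadingCoeff, d1]
      simp [coeff_X, coeff_one]
    have l2 : (3 * X ^ 2 - 3 * X + 1 : ℤ[X]).leadingCoeff = 3 := by
      rw [leadingCoeff, d2]
      simp [coeff_X, coeff_one, coeff_ofNat_mul]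
    have hp1 : (X ^ 2 - X + 1 : ℤ[X]).IsPrimitive := Monic.isPrimitive l1
    have hp2 : (3 * X ^ 2 - 3 * X + 1 : ℤ[X]).IsPrimitive := by
      intro r hr
      have := (C_dvd_iff_dvd_coeff _ _).1 hr 0
      simp [coeff_ofNat_mul] at this
      exact isUnit_of_dvd_one this
    have n1 : ∀ z : ℂ, aeval z (X ^ 2 - X + 1 : ℤ[X]) = 0 → ‖z‖ ≤ 1 := by
      intro z hz
      simp only [map_add, map_sub, map_pow, aeval_X, map_one] at hz
      have h3 : z ^ 3 = -1 := by linear_combination (z + 1) * hz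
      have h4 := congrArg norm h3
      rw [norm_pow, norm_neg, norm_one] at h4
      exact le_of_eq ((pow_eq_one_iff_of_nonneg (norm_nonneg z) (by norm_num)).1 h4)
    have n2 : ∀ z : ℂ, aeval z (3 * X ^ 2 - 3 * X + 1 : ℤ[X]) = 0 → ‖z‖ ≤ 1 := by
      intro z hz
      simp only [map_add, map_sub, map_mul, map_pow, aeval_X, map_one, map_ofNat] at hz
      have h3 : (2 * z - 1) ^ 2 = -(1 / 3) := by linear_combination (4 / 3) * hz
      have h4 := congrArg norm h3
      rw [norm_pow, norm_neg] at h4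
      norm_num at h4
      have h5 : ‖2 * z - 1‖ ≤ 1 := by nlinarith [norm_nonneg (2 * z - 1)]
      have h6 : ‖2 * z‖ ≤ ‖2 * z - 1‖ + ‖(1 : ℂ)‖ := by
        simpa using norm_add_le (2 * z - 1) 1
      rw [norm_mul, norm_one] at h6
      norm_num at h6
      linarith
    rw [e, height_quad _ d1 hp1 ?_ ?_ n1, height_quad _ d2 hp2 ?_ ?_ n2, l1, l2]
    · simp
      ring
    · simp only [map_add, map_sub, map_mul, map_pow, aeval_X, map_one, map_ofNat]
      linear_combination (s ^ 2 / 12) * hI2 - (1 / 12) * hs2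
    · simp [hs]
    · simp only [map_add, map_sub, map_mul, map_pow, aeval_X, map_one, map_ofNat]
      linear_combination (s ^ 2 / 4) * hI2 - (1 / 4) * hs2
    · simp [hs]
end
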